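/- arXiv:1703.02654 — 3 statements merged into one kernel-verified Lean document; each statement's English description precedes it below -/
import Mathlib

section
/- Let n ≥ 2 be an integer and let G be the grid P_n □ P_3. If j is an integer such that 2 ≤ j ≤ n−1, then 3j ∈ S_SC(G). -/
/-!  Common definitions: oriented graphs, geodesic convexity, convexity number,
strong convexity spectrum, and grid graphs. -/

variable {V : Type*}

/-- A directed walk of length `k` from `u` to `v` along the arc relation `A`,
encoded by the function `f` listing its vertices. -/
def IsDirWalk (A : V → V → Prop) (k : ℕ) (f : ℕ → V) (u v : V) : Prop :=
  f 0 = u ∧ f k = v ∧ ∀ i, i < k → A (f i) (f (i + 1))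

/-- There is a directed walk from `u` to `v`. -/
def DirReachable (A : V → V → Prop) (u v : V) : Prop :=
  ∃ k f, IsDirWalk A k f u v

/-- A digraph (given by its arc relation) is strongly connected. -/
def StrongConnected (A : V → V → Prop) : Prop :=
  ∀ u v : V, DirReachable A u v

/-- A `uv`-geodesic: a directed walk from `u` to `v` of minimum possible length
(such a walk is automatically a directed path). -/
def IsGeodesic (A : V → V → Prop) (k : ℕ) (f : ℕ → V) (u v : V) : Prop :=
  IsDirWalk A k f u v ∧ ∀ k' f', IsDirWalk A k' f' u v → k ≤ k'

/-- A nonempty vertex set `C` is convex if every vertex lying on a geodesic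
between two vertices of `C` (in either direction) belongs to `C`. -/
def DConvex (A : V → V → Prop) (C : Set V) : Prop :=
  C.Nonempty ∧ ∀ u ∈ C, ∀ v ∈ C, ∀ k f, IsGeodesic A k f u v → ∀ i ≤ k, f i ∈ C

/-- `A` is an orientation of the simple graph `G`: every arc is along an edge,
every edge gets an arc, and no edge gets both directions. -/
def IsOrientation (G : SimpleGraph V) (A : V → V → Prop) : Prop :=
  (∀ x y, A x y → G.Adj x y) ∧ (∀ x y, G.Adj x y → A x y ∨ A y x) ∧
    (∀ x y, A x y → ¬ A y x)

/-- The convexity number of a digraph: the maximum cardinality of a proper convex set. -/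
noncomputable def convexityNumber [Fintype V] (A : V → V → Prop) : ℕ :=
  sSup {k | ∃ C : Set V, DConvex A C ∧ C ≠ Set.univ ∧ C.ncard = k}

/-- The strong convexity spectrum of a graph: the set of convexity numbers of
its strongly connected orientations. -/
def strongConvexitySpectrum [Fintype V] (G : SimpleGraph V) : Set ℕ :=
  {k | ∃ A : V → V → Prop, IsOrientation G A ∧ StrongConnected A ∧ convexityNumber A = k}

/-- The grid graph `P_n □ P_m`. -/
def gridGraph (n m : ℕ) : SimpleGraph (Fin n × Fin m) :=
  (SimpleGraph.pathGraph n).boxProd (SimpleGraph.pathGraph m)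

namespace GridAux

set_option linter.unusedSectionVars false

/-! General facts on walks, geodesics and convex sets. -/

section general
variable {W : Type*} {A : W → W → Prop}

lemma reach_refl (u : W) : DirReachable A u u :=
  ⟨0, fun _ => u, rfl, rfl, fun i hi => absurd hi (by omega)⟩

lemma reach_step {u v : W} (h : A u v) : DirReachable A u v := by
  refine ⟨1, fun t => if t = 0 then u else v, by simp, by simp, ?_⟩
  intro i hi
  obtain rfl : i = 0 := by omega
  simpa using h

/-- Concatenation of walks. -/
lemma walk_append {k l : ℕ} {f g : ℕ → W} {u v w : W} (hf : IsDirWalk A k f u v)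
    (hg : IsDirWalk A l g v w) :
    IsDirWalk A (k + l) (fun t => if t ≤ k then f t else g (t - k)) u w := by
  obtain ⟨f0, fk, fs⟩ := hf
  obtain ⟨g0, gl, gs⟩ := hg
  refine ⟨by simpa using f0, ?_, ?_⟩
  · by_cases hl : l = 0
    · subst hl; simp [fk, ← g0, gl]
    · have : ¬ (k + l ≤ k) := by omega
      simp [hl, gl]
  · intro i hi
    rcases lt_trichotomy i k with h | h | h
    · have h1 : i ≤ k := by omega
      have h2 : i + 1 ≤ k := by omega
      simpa [h1, h2] using fs i h
    · subst h
      have h2 : ¬ (i + 1 ≤ i) := by omega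
      have := gs 0 (by omega)
      rw [g0] at this
      simpa [fk] using this
    · have h1 : ¬ (i ≤ k) := by omega
      have h2 : ¬ (i + 1 ≤ k) := by omega
      have := gs (i - k) (by omega)
      rw [show i - k + 1 = i + 1 - k by omega] at this
      simpa [h1, h2] using this

lemma reach_trans {u v w : W} (h1 : DirReachable A u v) (h2 : DirReachable A v w) :
    DirReachable A u w := by
  obtain ⟨k, f, hf⟩ := h1
  obtain ⟨l, g, hg⟩ := h2
  exact ⟨_, _, walk_append hf hg⟩

lemma walk_sub {k : ℕ} {f : ℕ → W} {u v : W} (hf : IsDirWalk A k f u v) {a b : ℕ}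
    (hab : a ≤ b) (hb : b ≤ k) : IsDirWalk A (b - a) (fun t => f (a + t)) (f a) (f b) := by
  refine ⟨rfl, by simp [hab], fun i hi => ?_⟩
  exact hf.2.2 (a + i) (by omega)

/-- A part of a geodesic is at most as long as any walk with the same ends. -/
lemma geo_sub {k : ℕ} {f : ℕ → W} {u v : W} (hf : IsGeodesic A k f u v) {a b : ℕ}
    (hab : a ≤ b) (hb : b ≤ k) {l : ℕ} {g : ℕ → W} (hg : IsDirWalk A l g (f a) (f b)) :
    b - a ≤ l := by
  have h1 := walk_sub hf.1 (Nat.zero_le a) (hab.trans hb)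
  have h2 := walk_sub hf.1 hb le_rfl
  rw [hf.1.1] at h1
  rw [hf.1.2.1] at h2
  have := hf.2 _ _ (walk_append (walk_append h1 hg) h2)
  omega

lemma exists_geo (hs : StrongConnected A) (u v : W) : ∃ k f, IsGeodesic A k f u v := by
  classical
  have h : ∃ k, ∃ f, IsDirWalk A k f u v := hs u v
  obtain ⟨f, hf⟩ := Nat.find_spec h
  exact ⟨Nat.find h, f, hf, fun k' f' h' => Nat.find_min' h ⟨f', h'⟩⟩

lemma exists_out (hs : StrongConnected A) {S : Set W} (hS : DConvex A S) {x y : W}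
    (hx : x ∈ S) (hy : y ∈ S) (hne : x ≠ y) : ∃ z ∈ S, A x z := by
  obtain ⟨k, f, hf⟩ := exists_geo hs x y
  have hk : k ≠ 0 := by
    rintro rfl
    exact hne (hf.1.1.symm.trans hf.1.2.1)
  refine ⟨f 1, hS.2 x hx y hy k f hf 1 (by omega), ?_⟩
  have := hf.1.2.2 0 (by omega)
  rwa [hf.1.1] at this

lemma exists_in (hs : StrongConnected A) {S : Set W} (hS : DConvex A S) {x y : W}
    (hx : x ∈ S) (hy : y ∈ S) (hne : x ≠ y) : ∃ z ∈ S, A z x := by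
  obtain ⟨k, f, hf⟩ := exists_geo hs y x
  have hk : k ≠ 0 := by
    rintro rfl
    exact hne (hf.1.2.1.symm.trans hf.1.1)
  refine ⟨f (k - 1), hS.2 y hy x hx k f hf (k - 1) (by omega), ?_⟩
  have := hf.1.2.2 (k - 1) (by omega)
  rwa [show k - 1 + 1 = k by omega, hf.1.2.1] at this

lemma walk2 {a b c : W} (h1 : A a b) (h2 : A b c) :
    IsDirWalk A 2 (fun t => if t = 0 then a else if t = 1 then b else c) a c := by
  refine ⟨by simp, by simp, fun i hi => ?_⟩
  interval_cases i <;> simpa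

lemma walk4 {a b c d e : W} (h1 : A a b) (h2 : A b c) (h3 : A c d) (h4 : A d e) :
    IsDirWalk A 4 (fun t => if t = 0 then a else if t = 1 then b else if t = 2 then c
      else if t = 3 then d else e) a e := by
  refine ⟨by simp, by simp, fun i hi => ?_⟩
  interval_cases i <;> simpa

lemma walk3 {a b c d : W} (h1 : A a b) (h2 : A b c) (h3 : A c d) :
    IsDirWalk A 3 (fun t => if t = 0 then a else if t = 1 then b else if t = 2 then c
      else d) a d := by
  refine ⟨by simp, by simp, fun i hi => ?_⟩
  interval_cases i <;> simpa

lemma walk_cases0 {f : ℕ → W} {a b : W} (h : IsDirWalk A 0 f a b) : a = b :=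
  h.1.symm.trans h.2.1

lemma walk_cases1 {f : ℕ → W} {a b : W} (h : IsDirWalk A 1 f a b) : A a b := by
  have := h.2.2 0 (by omega)
  rwa [h.1, h.2.1] at this

lemma walk_cases2 {f : ℕ → W} {a b : W} (h : IsDirWalk A 2 f a b) : ∃ w, A a w ∧ A w b := by
  have h0 := h.2.2 0 (by omega)
  have h1 := h.2.2 1 (by omega)
  rw [h.1] at h0
  rw [h.2.1] at h1
  exact ⟨_, h0, h1⟩

lemma walk_cases3 {f : ℕ → W} {a b : W} (h : IsDirWalk A 3 f a b) :
    ∃ w z, A a w ∧ A w z ∧ A z b := by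
  have h0 := h.2.2 0 (by omega)
  have h1 := h.2.2 1 (by omega)
  have h2 := h.2.2 2 (by omega)
  rw [h.1] at h0
  rw [h.2.1] at h2
  exact ⟨_, _, h0, h1, h2⟩

/-- Intermediate vertex of a geodesic of length two. -/
lemma fill2 {S : Set W} (hS : DConvex A S) {a b c : W} (h1 : A a b) (h2 : A b c)
    (ha : a ∈ S) (hc : c ∈ S) (hac : a ≠ c) (hn : ¬ A a c) : b ∈ S := by
  have hg : IsGeodesic A 2 _ a c := ⟨walk2 h1 h2, fun k' f' hwalk => by
    by_contra hlt
    have : k' < 2 := by omega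
    interval_cases k'
    · exact hac (walk_cases0 hwalk)
    · exact hn (walk_cases1 hwalk)⟩
  simpa using hS.2 a ha c hc _ _ hg 1 (by omega)

/-- Intermediate vertices of a geodesic of length three. -/
lemma fill3 {S : Set W} (hS : DConvex A S) {a b c d : W} (h1 : A a b) (h2 : A b c) (h3 : A c d)
    (ha : a ∈ S) (hd : d ∈ S) (h0 : a ≠ d) (hn : ¬ A a d) (hn2 : ∀ w, A a w → ¬ A w d) :
    b ∈ S ∧ c ∈ S := by
  have hg : IsGeodesic A 3 _ a d := ⟨walk3 h1 h2 h3, fun k' f' h' => by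
    by_contra hlt
    have : k' < 3 := by omega
    interval_cases k'
    · exact h0 (walk_cases0 h')
    · exact hn (walk_cases1 h')
    · obtain ⟨w, hw, hw'⟩ := walk_cases2 h'
      exact hn2 w hw hw'⟩
  exact ⟨by simpa using hS.2 a ha d hd _ _ hg 1 (by omega),
    by simpa using hS.2 a ha d hd _ _ hg 2 (by omega)⟩

/-- Intermediate vertices of a geodesic of length four. -/
lemma fill4 {S : Set W} (hS : DConvex A S) {a b c d e : W} (h1 : A a b) (h2 : A b c) (h3 : A c d)
    (h4 : A d e) (ha : a ∈ S) (he : e ∈ S) (h0 : a ≠ e) (hn : ¬ A a e)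
    (hn2 : ∀ w, A a w → ¬ A w e) (hn3 : ∀ w z, A a w → A w z → ¬ A z e) :
    b ∈ S ∧ c ∈ S ∧ d ∈ S := by
  have hg : IsGeodesic A 4 _ a e := ⟨walk4 h1 h2 h3 h4, fun k' f' h' => by
    by_contra hlt
    have : k' < 4 := by omega
    interval_cases k'
    · exact h0 (walk_cases0 h')
    · exact hn (walk_cases1 h')
    · obtain ⟨w, hw, hw'⟩ := walk_cases2 h'
      exact hn2 w hw hw'
    · obtain ⟨w, z, hw, hw', hw''⟩ := walk_cases3 h'
      exact hn3 w z hw hw' hw''⟩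
  exact ⟨by simpa using hS.2 a ha e he _ _ hg 1 (by omega),
    by simpa using hS.2 a ha e he _ _ hg 2 (by omega),
    by simpa using hS.2 a ha e he _ _ hg 3 (by omega)⟩

lemma first_fail (P : ℕ → Prop) (i : ℕ) (h0 : P 0) (hi : ¬ P i) :
    ∃ a, a < i ∧ P a ∧ ¬ P (a + 1) := by
  induction i with
  | zero => exact absurd h0 hi
  | succ m ih =>
    by_cases hm : P m
    · exact ⟨m, by omega, hm, hi⟩
    · obtain ⟨a, ha, h⟩ := ih hm
      exact ⟨a, by omega, h⟩

lemma last_fail (P : ℕ → Prop) (i k : ℕ) (hik : i ≤ k) (hk : P k) (hi : ¬ P i) :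
    ∃ b, i ≤ b ∧ b < k ∧ ¬ P b ∧ P (b + 1) := by
  induction k, hik using Nat.le_induction with
  | base => exact absurd hk hi
  | succ m hm ih =>
    by_cases h : P m
    · obtain ⟨b, h1, h2, h3⟩ := ih h
      exact ⟨b, h1, by omega, h3⟩
    · exact ⟨m, hm, by omega, h, hk⟩

/-- Convexity criterion: detours through the complement are strictly too long. -/
lemma convex_of_detour {S : Set W} (hne : S.Nonempty)
    (h : ∀ x ∈ S, ∀ y, y ∉ S → A x y → ∀ z, z ∉ S → ∀ w ∈ S, A z w →
      ∀ l g, IsDirWalk A l g y z → ∃ m g', IsDirWalk A m g' x w ∧ m < l + 2) :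
    DConvex A S := by
  refine ⟨hne, fun u hu v hv k f hf i hi => ?_⟩
  by_contra hfi
  obtain ⟨a, hai, ha, ha'⟩ := first_fail (fun t => f t ∈ S) i (by simpa [hf.1.1] using hu) hfi
  obtain ⟨b, hib, hbk, hb, hb'⟩ := last_fail (fun t => f t ∈ S) i k hi
    (by simpa [hf.1.2.1] using hv) hfi
  obtain ⟨m, g', hg', hm⟩ := h _ ha _ ha' (hf.1.2.2 a (by omega)) _ hb _ hb' (hf.1.2.2 b hbk) _ _
    (walk_sub hf.1 (show a + 1 ≤ b by omega) (by omega))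
  have := geo_sub hf (show a ≤ b + 1 by omega) (by omega) hg'
  omega

end general

/-! Orientations of the grid given by two predicates. -/

/-- `V i c` says the edge between `(i,c)` and `(i,c+1)` points to `(i,c+1)`;
`H i c` says the edge between `(i,c)` and `(i+1,c)` points to `(i+1,c)`. -/
def arcN (V H : ℕ → ℕ → Prop) (a b c d : ℕ) : Prop :=
  (a = c ∧ d = b + 1 ∧ V a b) ∨ (a = c ∧ b = d + 1 ∧ ¬ V a d) ∨
    (c = a + 1 ∧ b = d ∧ H a b) ∨ (a = c + 1 ∧ b = d ∧ ¬ H c b)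

def gArc (V H : ℕ → ℕ → Prop) (n : ℕ) (x y : Fin n × Fin 3) : Prop :=
  arcN V H x.1.val x.2.val y.1.val y.2.val

lemma gArc_orientation (V H : ℕ → ℕ → Prop) (n : ℕ) :
    IsOrientation (gridGraph n 3) (gArc V H n) := by
  refine ⟨?_, ?_, ?_⟩
  · rintro ⟨a, b⟩ ⟨c, d⟩ h
    simp only [gArc, arcN, gridGraph, SimpleGraph.boxProd_adj, SimpleGraph.pathGraph_adj,
      Fin.ext_iff] at h ⊢
    omega
  · rintro ⟨a, b⟩ ⟨c, d⟩ h
    simp only [gArc, arcN, gridGraph, SimpleGraph.boxProd_adj, SimpleGraph.pathGraph_adj,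
      Fin.ext_iff] at h ⊢
    rcases h with ⟨h | h, e⟩ | ⟨h | h, e⟩
    · by_cases hh : H a b <;> simp [← h, ← e, hh]
    · by_cases hh : H c b <;> simp [← h, ← e, hh]
    · by_cases hh : V a b <;> simp [← h, ← e, hh]
    · by_cases hh : V a d <;> simp [← h, ← e, hh]
  · rintro ⟨a, b⟩ ⟨c, d⟩ h
    simp only [gArc, arcN] at h ⊢
    grind

/-- The vertex with the given coordinates. -/
def vx (n : ℕ) [NeZero n] (i c : ℕ) : Fin n × Fin 3 := (Fin.ofNat n i, Fin.ofNat 3 c)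

variable {n : ℕ} [NeZero n] {V H : ℕ → ℕ → Prop}

lemma vx_fst {i c : ℕ} (hi : i < n) : ((vx n i c).1 : ℕ) = i := by
  simp [vx, Nat.mod_eq_of_lt hi]

lemma vx_snd {i c : ℕ} (hc : c < 3) : ((vx n i c).2 : ℕ) = c := by
  simp [vx, Nat.mod_eq_of_lt hc]

lemma vx_eta (x : Fin n × Fin 3) : vx n x.1.val x.2.val = x := by
  ext
  · exact vx_fst x.1.2
  · exact vx_snd x.2.2

lemma exists_vx (x : Fin n × Fin 3) : ∃ i c, i < n ∧ c < 3 ∧ x = vx n i c :=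
  ⟨x.1.val, x.2.val, x.1.2, x.2.2, (vx_eta x).symm⟩

lemma gArc_vx {a b c d : ℕ} (ha : a < n) (hb : b < 3) (hc : c < n) (hd : d < 3) :
    gArc V H n (vx n a b) (vx n c d) ↔ arcN V H a b c d := by
  simp only [gArc, vx_fst ha, vx_fst hc, vx_snd hb, vx_snd hd]

lemma vx_inj {a b c d : ℕ} (ha : a < n) (hb : b < 3) (hc : c < n) (hd : d < 3) :
    vx n a b = vx n c d ↔ a = c ∧ b = d := by
  constructor
  · intro h
    have h1 := congrArg (fun x : Fin n × Fin 3 => (x.1 : ℕ)) h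
    have h2 := congrArg (fun x : Fin n × Fin 3 => (x.2 : ℕ)) h
    simp only [vx_fst ha, vx_fst hc, vx_snd hb, vx_snd hd] at h1 h2
    exact ⟨h1, h2⟩
  · rintro ⟨rfl, rfl⟩; rfl

lemma gArc_dist {x y : Fin n × Fin 3} (h : gArc V H n x y) :
    (x.1.val = y.1.val ∧ (x.2.val = y.2.val + 1 ∨ y.2.val = x.2.val + 1)) ∨
    (x.2.val = y.2.val ∧ (x.1.val = y.1.val + 1 ∨ y.1.val = x.1.val + 1)) := by
  simp only [gArc, arcN] at h
  omega

/-- A directed four-cycle is contained in any convex set containing one of its arcs. -/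
lemma face_fill {S : Set (Fin n × Fin 3)} (hS : DConvex (gArc V H n) S) {a b c d : Fin n × Fin 3}
    (h1 : gArc V H n a b) (h2 : gArc V H n b c) (h3 : gArc V H n c d) (h4 : gArc V H n d a)
    (ha : a ∈ S) (hb : b ∈ S) : c ∈ S ∧ d ∈ S := by
  have hd := gArc_dist h1
  refine fill3 hS h2 h3 h4 hb ha ?_ ?_ ?_
  · rintro rfl; omega
  · exact (gArc_orientation V H n).2.2 _ _ h1
  · intro w hw hw'
    have := gArc_dist hw
    have := gArc_dist hw'
    omega

/-- A convex set containing both ends of a column whose return path has length four. -/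
lemma ring_fill {S : Set (Fin n × Fin 3)} (hS : DConvex (gArc V H n) S) {i p q : ℕ} (hi : i < n)
    (hpq : p + q = 2) (hpne : p ≠ q)
    {b c d : Fin n × Fin 3}
    (h1 : gArc V H n (vx n i p) b) (h2 : gArc V H n b c) (h3 : gArc V H n c d)
    (h4 : gArc V H n d (vx n i q))
    (ha : vx n i p ∈ S) (he : vx n i q ∈ S)
    (hno : ¬ (arcN V H i p i 1 ∧ arcN V H i 1 i q)) : b ∈ S ∧ c ∈ S ∧ d ∈ S := by
  have e1 : ((vx n i p).1 : ℕ) = i := vx_fst hi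
  have e2 : ((vx n i p).2 : ℕ) = p := vx_snd (by omega)
  have e3 : ((vx n i q).1 : ℕ) = i := vx_fst hi
  have e4 : ((vx n i q).2 : ℕ) = q := vx_snd (by omega)
  refine fill4 hS h1 h2 h3 h4 ha he ?_ ?_ ?_ ?_
  · rw [Ne, vx_inj hi (by omega) hi (by omega)]; omega
  · intro h; have := gArc_dist h; omega
  · intro w hw hw'
    have h5 := gArc_dist hw
    have h6 := gArc_dist hw'
    have e5 : w.1.val = i := by omega
    have e6 : w.2.val = 1 := by omega
    apply hno
    unfold gArc at hw hw'
    rw [e1, e2, e5, e6] at hw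
    rw [e3, e4, e5, e6] at hw'
    exact ⟨hw, hw'⟩
  · intro w z hw hwz hz
    have := gArc_dist hw
    have := gArc_dist hwz
    have := gArc_dist hz
    omega

/-- The shape of the orientation on the first `j` columns. -/
structure HeadShape (V H : ℕ → ℕ → Prop) (j : ℕ) : Prop where
  hV : ∀ i c, i < j → (V i c ↔ (i + j) % 2 = 1)
  hH0 : ∀ i, i + 1 < j → (H i 0 ↔ (i + j) % 2 = 0)
  hH2 : ∀ i, i + 1 < j → (H i 2 ↔ (i + j) % 2 = 1)

lemma head_step {j : ℕ} (hh : HeadShape V H j) (hj : j < n) {S : Set (Fin n × Fin 3)}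
    (hS : DConvex (gArc V H n) S) (i : ℕ) (hi : i + 1 < j) (h0 : vx n (i + 1) 0 ∈ S)
    (h2 : vx n (i + 1) 2 ∈ S) : vx n i 0 ∈ S ∧ vx n i 1 ∈ S ∧ vx n i 2 ∈ S := by
  have a1 := hh.hV i 0 (by omega)
  have a2 := hh.hV i 1 (by omega)
  have a3 := hh.hV (i + 1) 0 (by omega)
  have a4 := hh.hV (i + 1) 1 (by omega)
  have a5 := hh.hH0 i hi
  have a6 := hh.hH2 i hi
  rcases Nat.mod_two_eq_zero_or_one (i + j) with hp | hp
  · obtain ⟨x, y, z⟩ := ring_fill (V := V) (H := H) hS (i := i + 1) (p := 2) (q := 0)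
      (b := vx n i 2) (c := vx n i 1) (d := vx n i 0) (by omega) (by omega) (by omega)
      (by rw [gArc_vx (by omega) (by omega) (by omega) (by omega)]; unfold arcN; grind)
      (by rw [gArc_vx (by omega) (by omega) (by omega) (by omega)]; unfold arcN; grind)
      (by rw [gArc_vx (by omega) (by omega) (by omega) (by omega)]; unfold arcN; grind)
      (by rw [gArc_vx (by omega) (by omega) (by omega) (by omega)]; unfold arcN; grind)
      h2 h0 (by unfold arcN; grind)
    exact ⟨z, y, x⟩
  · exact ring_fill (V := V) (H := H) hS (i := i + 1) (p := 0) (q := 2)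
      (b := vx n i 0) (c := vx n i 1) (d := vx n i 2) (by omega) (by omega) (by omega)
      (by rw [gArc_vx (by omega) (by omega) (by omega) (by omega)]; unfold arcN; grind)
      (by rw [gArc_vx (by omega) (by omega) (by omega) (by omega)]; unfold arcN; grind)
      (by rw [gArc_vx (by omega) (by omega) (by omega) (by omega)]; unfold arcN; grind)
      (by rw [gArc_vx (by omega) (by omega) (by omega) (by omega)]; unfold arcN; grind)
      h0 h2 (by unfold arcN; grind)

lemma col_mem {S : Set (Fin n × Fin 3)} {i c : ℕ} (hc : c < 3)
    (h : vx n i 0 ∈ S ∧ vx n i 1 ∈ S ∧ vx n i 2 ∈ S) : vx n i c ∈ S := by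
  interval_cases c
  exacts [h.1, h.2.1, h.2.2]

/-- Once the two ends of column `j-1` are there, the whole head is (column `j-1` needs
its middle vertex, which lies on the geodesic along the column). -/
lemma head_fill {j : ℕ} (hh : HeadShape V H j) (hj : j < n) (hj2 : 2 ≤ j) {S : Set (Fin n × Fin 3)}
    (hS : DConvex (gArc V H n) S) (h0 : vx n (j - 1) 0 ∈ S)
    (h2 : vx n (j - 1) 2 ∈ S) : ∀ i c, i < j → c < 3 → vx n i c ∈ S := by
  have h1 : vx n (j - 1) 1 ∈ S := by
    have a1 := hh.hV (j - 1) 0 (by omega)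
    have a2 := hh.hV (j - 1) 1 (by omega)
    have hp : (j - 1 + j) % 2 = 1 := by omega
    refine fill2 hS (a := vx n (j - 1) 0) (c := vx n (j - 1) 2) ?_ ?_ h0 h2 ?_ ?_
    · rw [gArc_vx (by omega) (by omega) (by omega) (by omega)]; unfold arcN; grind
    · rw [gArc_vx (by omega) (by omega) (by omega) (by omega)]; unfold arcN; grind
    · rw [Ne, vx_inj (by omega) (by omega) (by omega) (by omega)]; omega
    · rw [gArc_vx (by omega) (by omega) (by omega) (by omega)]; unfold arcN; omega
  have key : ∀ t, t < j → vx n (j - 1 - t) 0 ∈ S ∧ vx n (j - 1 - t) 1 ∈ S ∧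
      vx n (j - 1 - t) 2 ∈ S := by
    intro t
    induction t with
    | zero => intro _; exact ⟨h0, h1, h2⟩
    | succ t ih =>
      intro ht
      obtain ⟨x, y, z⟩ := ih (by omega)
      have e : j - 1 - t = (j - 1 - (t + 1)) + 1 := by omega
      rw [e] at x z
      exact head_step hh hj hS _ (by omega) x z
  intro i c hi hc
  have := key (j - 1 - i) (by omega)
  rw [show j - 1 - (j - 1 - i) = i by omega] at this
  exact col_mem hc this

/-- Mutual reachability. -/
def Mut (V H : ℕ → ℕ → Prop) (n : ℕ) (x y : Fin n × Fin 3) : Prop :=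
  DirReachable (gArc V H n) x y ∧ DirReachable (gArc V H n) y x

lemma Mut.trans' {x y z : Fin n × Fin 3} (h : Mut V H n x y) (h' : Mut V H n y z) :
    Mut V H n x z := ⟨reach_trans h.1 h'.1, reach_trans h'.2 h.2⟩

lemma Mut.symm' {x y : Fin n × Fin 3} (h : Mut V H n x y) : Mut V H n y x := ⟨h.2, h.1⟩

lemma strong_of_mut {o : Fin n × Fin 3} (h : ∀ x, Mut V H n x o) : StrongConnected (gArc V H n) :=
  fun u v => reach_trans (h u).1 (h v).2

lemma mut_cycle4 {a b c d : Fin n × Fin 3}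
    (h1 : gArc V H n a b) (h2 : gArc V H n b c) (h3 : gArc V H n c d) (h4 : gArc V H n d a) :
    Mut V H n b a ∧ Mut V H n c a ∧ Mut V H n d a := by
  have r1 := reach_step h1
  have r2 := reach_step h2
  have r3 := reach_step h3
  have r4 := reach_step h4
  have r34 := reach_trans r3 r4
  have r12 := reach_trans r1 r2
  exact ⟨⟨reach_trans r2 r34, r1⟩, ⟨r34, r12⟩, ⟨r4, reach_trans r12 r3⟩⟩

lemma mut_cycle6 {a b c d e f : Fin n × Fin 3}
    (h1 : gArc V H n a b) (h2 : gArc V H n b c) (h3 : gArc V H n c d) (h4 : gArc V H n d e)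
    (h5 : gArc V H n e f) (h6 : gArc V H n f a) :
    Mut V H n b a ∧ Mut V H n c a ∧ Mut V H n d a ∧ Mut V H n e a ∧ Mut V H n f a := by
  have r1 := reach_step h1
  have r2 := reach_trans r1 (reach_step h2)
  have r3 := reach_trans r2 (reach_step h3)
  have r4 := reach_trans r3 (reach_step h4)
  have r5 := reach_trans r4 (reach_step h5)
  have s5 := reach_step h6
  have s4 := reach_trans (reach_step h5) s5
  have s3 := reach_trans (reach_step h4) s4
  have s2 := reach_trans (reach_step h3) s3
  have s1 := reach_trans (reach_step h2) s2
  exact ⟨⟨s1, r1⟩, ⟨s2, r2⟩, ⟨s3, r3⟩, ⟨s4, r4⟩, ⟨s5, r5⟩⟩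

/-- Column `i` is mutually reachable with its own top and the top of column `i+1`. -/
lemma head_mut_step {j : ℕ} (hh : HeadShape V H j) (hj : j < n) (i : ℕ) (hi : i + 1 < j) :
    (∀ c, c < 3 → Mut V H n (vx n i c) (vx n i 0)) ∧
    (∀ c, c < 3 → Mut V H n (vx n (i + 1) c) (vx n i 0)) := by
  have a1 := hh.hV i 0 (by omega)
  have a2 := hh.hV i 1 (by omega)
  have a3 := hh.hV (i + 1) 0 (by omega)
  have a4 := hh.hV (i + 1) 1 (by omega)
  have a5 := hh.hH0 i hi
  have a6 := hh.hH2 i hi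
  have r : Mut V H n (vx n i 0) (vx n i 0) := ⟨reach_refl _, reach_refl _⟩
  rcases Nat.mod_two_eq_zero_or_one (i + j) with hp | hp
  · obtain ⟨x1, x2, x3, x4, x5⟩ := mut_cycle6 (V := V) (H := H) (a := vx n i 0)
      (b := vx n (i + 1) 0) (c := vx n (i + 1) 1) (d := vx n (i + 1) 2)
      (e := vx n i 2) (f := vx n i 1)
      (by rw [gArc_vx (by omega) (by omega) (by omega) (by omega)]; unfold arcN; grind)
      (by rw [gArc_vx (by omega) (by omega) (by omega) (by omega)]; unfold arcN; grind)
      (by rw [gArc_vx (by omega) (by omega) (by omega) (by omega)]; unfold arcN; grind)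
      (by rw [gArc_vx (by omega) (by omega) (by omega) (by omega)]; unfold arcN; grind)
      (by rw [gArc_vx (by omega) (by omega) (by omega) (by omega)]; unfold arcN; grind)
      (by rw [gArc_vx (by omega) (by omega) (by omega) (by omega)]; unfold arcN; grind)
    constructor <;> intro c hc <;> interval_cases c <;> assumption
  · obtain ⟨x1, x2, x3, x4, x5⟩ := mut_cycle6 (V := V) (H := H) (a := vx n i 0)
      (b := vx n i 1) (c := vx n i 2) (d := vx n (i + 1) 2)
      (e := vx n (i + 1) 1) (f := vx n (i + 1) 0)
      (by rw [gArc_vx (by omega) (by omega) (by omega) (by omega)]; unfold arcN; grind)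
      (by rw [gArc_vx (by omega) (by omega) (by omega) (by omega)]; unfold arcN; grind)
      (by rw [gArc_vx (by omega) (by omega) (by omega) (by omega)]; unfold arcN; grind)
      (by rw [gArc_vx (by omega) (by omega) (by omega) (by omega)]; unfold arcN; grind)
      (by rw [gArc_vx (by omega) (by omega) (by omega) (by omega)]; unfold arcN; grind)
      (by rw [gArc_vx (by omega) (by omega) (by omega) (by omega)]; unfold arcN; grind)
    constructor <;> intro c hc <;> interval_cases c <;> assumption

lemma head_mut {j : ℕ} (hh : HeadShape V H j) (hj : j < n) (hj2 : 2 ≤ j) (i : ℕ) :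
    i < j → ∀ c, c < 3 → Mut V H n (vx n i c) (vx n 0 0) := by
  induction i with
  | zero => intro _; exact (head_mut_step hh hj 0 (by omega)).1
  | succ i ih =>
    intro hi c hc
    exact ((head_mut_step hh hj i (by omega)).2 c hc).trans' (ih (by omega) 0 (by omega))

/-- The head. -/
def headSet (n j : ℕ) : Set (Fin n × Fin 3) := {x | x.1.val < j}

lemma headSet_ncard {j : ℕ} (hj : j < n) : (headSet n j).ncard = 3 * j := by
  have e : headSet n j = (Set.Iio (⟨j, hj⟩ : Fin n)) ×ˢ (Set.univ : Set (Fin 3)) := by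
    ext x
    simp [headSet, Fin.lt_def]
  rw [e, Set.ncard_prod, Set.ncard_univ, Nat.card_eq_fintype_card, Fintype.card_fin,
    Set.ncard_eq_toFinset_card']
  simp [mul_comm]

lemma con_eq {j : ℕ} (hj : j < n) (hj2 : 2 ≤ j)
    (hc : DConvex (gArc V H n) (headSet n j))
    (hbig : ∀ S, DConvex (gArc V H n) S → (∀ x ∈ S, ∃ y ∈ S, x ≠ y) →
      (∃ x ∈ S, j ≤ x.1.val) → S = Set.univ) :
    convexityNumber (gArc V H n) = 3 * j := by
  apply IsGreatest.csSup_eq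
  constructor
  · refine ⟨_, hc, ?_, headSet_ncard hj⟩
    intro h
    have : (⟨⟨j, hj⟩, 0⟩ : Fin n × Fin 3) ∈ headSet n j := h ▸ Set.mem_univ _
    simp [headSet] at this
  · rintro k ⟨S, hS, hne, rfl⟩
    by_contra hlt
    push Not at hlt
    apply hne
    apply hbig S hS
    · intro x hx
      obtain ⟨y, hy, hyx⟩ := Set.exists_ne_of_one_lt_ncard (s := S) (by omega) x
      exact ⟨y, hy, hyx.symm⟩
    · by_contra hno
      push Not at hno
      have : S ⊆ headSet n j := fun x hx => hno x hx
      have := Set.ncard_le_ncard this (Set.toFinite _)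
      rw [headSet_ncard hj] at this
      omega

/-! Coordinate versions of the neighbour lemmas. -/

lemma out_coord (hs : StrongConnected (gArc V H n)) {S : Set (Fin n × Fin 3)}
    (hS : DConvex (gArc V H n) S) (hnt : ∀ x ∈ S, ∃ y ∈ S, x ≠ y) {i c : ℕ} (hi : i < n)
    (hc : c < 3) (h : vx n i c ∈ S) :
    ∃ i' c', i' < n ∧ c' < 3 ∧ arcN V H i c i' c' ∧ vx n i' c' ∈ S := by
  obtain ⟨y, hy, hne⟩ := hnt _ h
  obtain ⟨z, hz, hA⟩ := exists_out hs hS h hy hne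
  obtain ⟨i', c', hi', hc', rfl⟩ := exists_vx z
  exact ⟨i', c', hi', hc', (gArc_vx hi hc hi' hc').1 hA, hz⟩

lemma in_coord (hs : StrongConnected (gArc V H n)) {S : Set (Fin n × Fin 3)}
    (hS : DConvex (gArc V H n) S) (hnt : ∀ x ∈ S, ∃ y ∈ S, x ≠ y) {i c : ℕ} (hi : i < n)
    (hc : c < 3) (h : vx n i c ∈ S) :
    ∃ i' c', i' < n ∧ c' < 3 ∧ arcN V H i' c' i c ∧ vx n i' c' ∈ S := by
  obtain ⟨y, hy, hne⟩ := hnt _ h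
  obtain ⟨z, hz, hA⟩ := exists_in hs hS h hy hne
  obtain ⟨i', c', hi', hc', rfl⟩ := exists_vx z
  exact ⟨i', c', hi', hc', (gArc_vx hi' hc' hi hc).1 hA, hz⟩

lemma mem_head {i c j : ℕ} (hi : i < n) : vx n i c ∈ headSet n j ↔ i < j := by
  simp only [headSet, Set.mem_ofPred_eq, vx_fst hi]

/-! First case: `n = j + 1`. -/

def VA (j i _c : ℕ) : Prop := j ≤ i ∨ (i + j) % 2 = 1

def HA (j i c : ℕ) : Prop :=
  (i + 1 < j ∧ (c = 0 ∧ (i + j) % 2 = 0 ∨ c = 1 ∨ c = 2 ∧ (i + j) % 2 = 1)) ∨ (j ≤ i + 1 ∧ c = 0)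

lemma shapeA (j : ℕ) : HeadShape (VA j) (HA j) j := by
  constructor
  · intro i c hi; unfold VA; omega
  · intro i hi; unfold HA; omega
  · intro i hi; unfold HA; omega

lemma arcA {j a b c d : ℕ} (ha : a < n) (hb : b < 3) (hc : c < n) (hd : d < 3)
    (h : arcN (VA j) (HA j) a b c d) : gArc (VA j) (HA j) n (vx n a b) (vx n c d) :=
  (gArc_vx ha hb hc hd).2 h

lemma strongA {j : ℕ} (hj : j + 1 = n) (hj2 : 2 ≤ j) : StrongConnected (gArc (VA j) (HA j) n) := by
  have hm := head_mut (shapeA j) (show j < n by omega) hj2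
  have e1 := reach_step (arcA (n := n) (j := j) (a := j - 1) (b := 0) (c := j) (d := 0) (by omega)
    (by omega) (by omega) (by omega) (by unfold arcN VA HA; omega))
  have e2 := reach_step (arcA (n := n) (j := j) (a := j) (b := 0) (c := j) (d := 1) (by omega)
    (by omega) (by omega) (by omega) (by unfold arcN VA HA; omega))
  have e3 := reach_step (arcA (n := n) (j := j) (a := j) (b := 1) (c := j) (d := 2) (by omega)
    (by omega) (by omega) (by omega) (by unfold arcN VA HA; omega))
  have e4 := reach_step (arcA (n := n) (j := j) (a := j) (b := 2) (c := j - 1) (d := 2) (by omega)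
    (by omega) (by omega) (by omega) (by unfold arcN VA HA; omega))
  have r0 := reach_trans (hm (j - 1) (by omega) 0 (by omega)).2 e1
  have r1 := reach_trans r0 e2
  have r2 := reach_trans r1 e3
  have s2 := reach_trans e4 (hm (j - 1) (by omega) 2 (by omega)).1
  have s1 := reach_trans e3 s2
  have s0 := reach_trans e2 s1
  apply strong_of_mut (o := vx n 0 0)
  intro x
  obtain ⟨i, c, hi, hc, rfl⟩ := exists_vx x
  by_cases hij : i < j
  · exact hm i hij c hc
  · obtain rfl : i = j := by omega
    interval_cases c
    exacts [⟨s0, r0⟩, ⟨s1, r1⟩, ⟨s2, r2⟩]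

lemma convexA {j : ℕ} (hj : j + 1 = n) (hj2 : 2 ≤ j) :
    DConvex (gArc (VA j) (HA j) n) (headSet n j) := by
  apply convex_of_detour
  · exact ⟨vx n 0 0, (mem_head (by omega)).2 (by omega)⟩
  intro x hx y hy hxy z hz w hw hzw l g hg
  obtain ⟨a, b, ha, hb, rfl⟩ := exists_vx x
  obtain ⟨a', b', ha', hb', rfl⟩ := exists_vx y
  obtain ⟨c, d, hc, hd, rfl⟩ := exists_vx z
  obtain ⟨c', d', hc', hd', rfl⟩ := exists_vx w
  rw [mem_head (by omega)] at hx hy hz hw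
  rw [gArc_vx ha hb ha' hb'] at hxy
  rw [gArc_vx hc hd hc' hd'] at hzw
  unfold arcN VA HA at hxy hzw
  have e1 : a = j - 1 ∧ b = 0 ∧ a' = j ∧ b' = 0 := by omega
  obtain ⟨rfl, rfl, rfl, rfl⟩ := e1
  have e2 : c = a' ∧ c' = a' - 1 ∧ d' = d ∧ d ≠ 0 := by omega
  obtain ⟨rfl, rfl, rfl, hd0⟩ := e2
  have hl : l ≠ 0 := by
    rintro rfl
    have := walk_cases0 hg
    rw [vx_inj (by omega) (by omega) (by omega) (by omega)] at this
    omega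
  have f1 := arcA (n := n) (j := c) (a := c - 1) (b := 0) (c := c - 1) (d := 1) (by omega)
    (by omega) (by omega) (by omega) (by unfold arcN VA HA; omega)
  have f2 := arcA (n := n) (j := c) (a := c - 1) (b := 1) (c := c - 1) (d := 2) (by omega)
    (by omega) (by omega) (by omega) (by unfold arcN VA HA; omega)
  have : d' = 1 ∨ d' = 2 := by omega
  rcases this with rfl | rfl
  · refine ⟨1, fun t => if t = 0 then vx n (c - 1) 0 else vx n (c - 1) 1, ⟨by simp, by simp, ?_⟩,
      by omega⟩
    intro i hi
    obtain rfl : i = 0 := by omega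
    simpa using f1
  · exact ⟨2, _, walk2 f1 f2, by omega⟩

lemma bigA {j : ℕ} (hj : j + 1 = n) (hj2 : 2 ≤ j) (S : Set (Fin n × Fin 3))
    (hS : DConvex (gArc (VA j) (HA j) n) S) (hnt : ∀ x ∈ S, ∃ y ∈ S, x ≠ y)
    (hx : ∃ x ∈ S, j ≤ x.1.val) : S = Set.univ := by
  have hs := strongA hj hj2
  obtain ⟨x, hx, hxj⟩ := hx
  obtain ⟨i, c, hi, hc, rfl⟩ := exists_vx x
  rw [vx_fst hi] at hxj
  obtain rfl : i = j := by omega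
  have back : ∀ c, c + 1 < 3 → vx n i (c + 1) ∈ S → vx n i c ∈ S := by
    intro c hc h
    obtain ⟨i', c', hi', hc', hA, hm⟩ := in_coord hs hS hnt hi hc h
    unfold arcN VA HA at hA
    have : i' = i ∧ c' = c := by omega
    obtain ⟨rfl, rfl⟩ := this
    exact hm
  have t0 : vx n i 0 ∈ S := by
    interval_cases c
    · exact hx
    · exact back 0 (by omega) hx
    · exact back 0 (by omega) (back 1 (by omega) hx)
  have p0 : vx n (i - 1) 0 ∈ S := by
    obtain ⟨i', c', hi', hc', hA, hm⟩ := in_coord hs hS hnt hi (by omega) t0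
    unfold arcN VA HA at hA
    have : i' = i - 1 ∧ c' = 0 := by omega
    obtain ⟨rfl, rfl⟩ := this
    exact hm
  have t1 : vx n i 1 ∈ S := by
    obtain ⟨i', c', hi', hc', hA, hm⟩ := out_coord hs hS hnt hi (by omega) t0
    unfold arcN VA HA at hA
    have : i' = i ∧ c' = 1 := by omega
    obtain ⟨rfl, rfl⟩ := this
    exact hm
  have p2 : vx n (i - 1) 2 ∈ S := by
    obtain ⟨i', c', hi', hc', hA, hm⟩ := out_coord hs hS hnt hi (by omega) t1
    obtain ⟨i2, c2, hi2, hc2, hA2, hm2⟩ := out_coord hs hS hnt hi' hc' hm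
    unfold arcN VA HA at hA hA2
    have : i2 = i - 1 ∧ c2 = 2 := by omega
    obtain ⟨rfl, rfl⟩ := this
    exact hm2
  have t2 : vx n i 2 ∈ S := by
    refine fill2 hS (arcA hi (by omega) hi (by omega) ?_)
      (arcA hi (by omega) (by omega) (by omega) ?_) t1 p2 ?_ ?_
    · unfold arcN VA HA; omega
    · unfold arcN VA HA; omega
    · rw [Ne, vx_inj (by omega) (by omega) (by omega) (by omega)]; omega
    · rw [gArc_vx (by omega) (by omega) (by omega) (by omega)]; unfold arcN; omega
  have hf := head_fill (shapeA i) hi hj2 hS p0 p2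
  ext x
  refine ⟨fun _ => Set.mem_univ _, fun _ => ?_⟩
  obtain ⟨a, b, ha, hb, rfl⟩ := exists_vx x
  by_cases hai : a < i
  · exact hf a b hai hb
  · obtain rfl : a = i := by omega
    exact col_mem hb ⟨t0, t1, t2⟩

/-! Second case: `j + 2 ≤ n`. -/

def VB (j i c : ℕ) : Prop :=
  (i < j ∧ (i + j) % 2 = 1) ∨
    (j ≤ i ∧ (c = 0 ∧ (i + j) % 2 = 0 ∨ c = 1 ∧ (i + j) % 2 = 1))

def HB (j i c : ℕ) : Prop :=
  (i < j ∧ (c = 0 ∧ (i + j) % 2 = 0 ∨ c = 1 ∧ i + 1 = j ∨ c = 2 ∧ (i + j) % 2 = 1)) ∨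
    (j ≤ i ∧ (c = 1 ∧ (i + j) % 2 = 0 ∨ c ≠ 1 ∧ (i + j) % 2 = 1))

lemma shapeB (j : ℕ) : HeadShape (VB j) (HB j) j := by
  constructor
  · intro i c hi; unfold VB; omega
  · intro i hi; unfold HB; omega
  · intro i hi; unfold HB; omega

lemma arcB {j a b c d : ℕ} (ha : a < n) (hb : b < 3) (hc : c < n) (hd : d < 3)
    (h : arcN (VB j) (HB j) a b c d) : gArc (VB j) (HB j) n (vx n a b) (vx n c d) :=
  (gArc_vx ha hb hc hd).2 h

/-- Every face of the tail is a directed four-cycle. -/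
lemma faceB {j i c : ℕ} (hij : j ≤ i) (hi : i + 1 < n) (hc : c = 0 ∨ c = 2) :
    ((i + j) % 2 = 0 ∧
      gArc (VB j) (HB j) n (vx n i c) (vx n i 1) ∧
      gArc (VB j) (HB j) n (vx n i 1) (vx n (i + 1) 1) ∧
      gArc (VB j) (HB j) n (vx n (i + 1) 1) (vx n (i + 1) c) ∧
      gArc (VB j) (HB j) n (vx n (i + 1) c) (vx n i c)) ∨
    ((i + j) % 2 = 1 ∧
      gArc (VB j) (HB j) n (vx n i 1) (vx n i c) ∧
      gArc (VB j) (HB j) n (vx n i c) (vx n (i + 1) c) ∧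
      gArc (VB j) (HB j) n (vx n (i + 1) c) (vx n (i + 1) 1) ∧
      gArc (VB j) (HB j) n (vx n (i + 1) 1) (vx n i 1)) := by
  rcases Nat.mod_two_eq_zero_or_one (i + j) with hp | hp
  · left
    refine ⟨hp, ?_, ?_, ?_, ?_⟩ <;> apply arcB <;> first | omega | (unfold arcN VB HB; omega)
  · right
    refine ⟨hp, ?_, ?_, ?_, ?_⟩ <;> apply arcB <;> first | omega | (unfold arcN VB HB; omega)

lemma cycle_fill {S : Set (Fin n × Fin 3)} (hS : DConvex (gArc V H n) S) {a b c d : Fin n × Fin 3}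
    (h1 : gArc V H n a b) (h2 : gArc V H n b c) (h3 : gArc V H n c d) (h4 : gArc V H n d a)
    (h : a ∈ S ∧ b ∈ S ∨ b ∈ S ∧ c ∈ S ∨ c ∈ S ∧ d ∈ S ∨ d ∈ S ∧ a ∈ S) :
    a ∈ S ∧ b ∈ S ∧ c ∈ S ∧ d ∈ S := by
  have f1 := face_fill hS h1 h2 h3 h4
  have f2 := face_fill hS h2 h3 h4 h1
  have f3 := face_fill hS h3 h4 h1 h2
  have f4 := face_fill hS h4 h1 h2 h3
  tauto

lemma faceB_fill {j i c : ℕ} (hij : j ≤ i) (hi : i + 1 < n) (hc : c = 0 ∨ c = 2)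
    {S : Set (Fin n × Fin 3)} (hS : DConvex (gArc (VB j) (HB j) n) S)
    (h : (vx n i c ∈ S ∧ vx n i 1 ∈ S) ∨ (vx n i 1 ∈ S ∧ vx n (i + 1) 1 ∈ S) ∨
      (vx n (i + 1) 1 ∈ S ∧ vx n (i + 1) c ∈ S) ∨ (vx n (i + 1) c ∈ S ∧ vx n i c ∈ S)) :
    vx n i c ∈ S ∧ vx n i 1 ∈ S ∧ vx n (i + 1) 1 ∈ S ∧ vx n (i + 1) c ∈ S := by
  rcases faceB (n := n) hij hi hc with ⟨_, h1, h2, h3, h4⟩ | ⟨_, h1, h2, h3, h4⟩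
  · exact cycle_fill hS h1 h2 h3 h4 h
  · have := cycle_fill hS h1 h2 h3 h4 (by tauto)
    tauto

/-- All six vertices of a strip. -/
def Strip (n : ℕ) [NeZero n] (S : Set (Fin n × Fin 3)) (i : ℕ) : Prop :=
  ∀ c, c < 3 → vx n i c ∈ S ∧ vx n (i + 1) c ∈ S

lemma stripB {j i c : ℕ} (hij : j ≤ i) (hi : i + 1 < n) (hc : c = 0 ∨ c = 2)
    {S : Set (Fin n × Fin 3)} (hS : DConvex (gArc (VB j) (HB j) n) S)
    (h : (vx n i c ∈ S ∧ vx n i 1 ∈ S) ∨ (vx n i 1 ∈ S ∧ vx n (i + 1) 1 ∈ S) ∨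
      (vx n (i + 1) 1 ∈ S ∧ vx n (i + 1) c ∈ S) ∨ (vx n (i + 1) c ∈ S ∧ vx n i c ∈ S)) :
    Strip n S i := by
  obtain ⟨_, m1, m2, _⟩ := faceB_fill hij hi hc hS h
  obtain ⟨x0, _, _, x1⟩ := faceB_fill hij hi (Or.inl rfl) hS (Or.inr (Or.inl ⟨m1, m2⟩))
  obtain ⟨y0, _, _, y1⟩ := faceB_fill hij hi (Or.inr rfl) hS (Or.inr (Or.inl ⟨m1, m2⟩))
  intro d hd
  interval_cases d
  exacts [⟨x0, x1⟩, ⟨m1, m2⟩, ⟨y0, y1⟩]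

lemma strip_up {j i : ℕ} (hij : j ≤ i) (hi : i + 2 < n)
    {S : Set (Fin n × Fin 3)} (hS : DConvex (gArc (VB j) (HB j) n) S) (h : Strip n S i) :
    Strip n S (i + 1) :=
  stripB (c := 0) (by omega) (by omega) (Or.inl rfl) hS
    (Or.inl ⟨(h 0 (by omega)).2, (h 1 (by omega)).2⟩)

lemma strip_down {j i : ℕ} (hij : j ≤ i) (hi : i + 2 < n)
    {S : Set (Fin n × Fin 3)} (hS : DConvex (gArc (VB j) (HB j) n) S) (h : Strip n S (i + 1)) :
    Strip n S i :=
  stripB (c := 0) (by omega) (by omega) (Or.inl rfl) hS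
    (Or.inr (Or.inr (Or.inl ⟨(h 1 (by omega)).1, (h 0 (by omega)).1⟩)))

lemma strip_all {j i : ℕ} (hij : j ≤ i) (hi : i + 1 < n)
    {S : Set (Fin n × Fin 3)} (hS : DConvex (gArc (VB j) (HB j) n) S) (h : Strip n S i) :
    ∀ t, j ≤ t → t + 1 < n → Strip n S t := by
  have hbase : ∀ s, j + s ≤ i → Strip n S (i - s) := by
    intro s
    induction s with
    | zero => intro _; exact h
    | succ s ih =>
      intro hs
      have := ih (by omega)
      rw [show i - s = (i - (s + 1)) + 1 by omega] at this
      exact strip_down (by omega) (by omega) hS this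
  have h0 : Strip n S j := by
    have := hbase (i - j) (by omega)
    rwa [show i - (i - j) = j by omega] at this
  intro t ht
  induction t, ht using Nat.le_induction with
  | base => intro _; exact h0
  | succ t ht ih => intro ht'; exact strip_up ht (by omega) hS (ih (by omega))

lemma tail_mut_step {j i : ℕ} (hij : j ≤ i) (hi : i + 1 < n) :
    (∀ c, c < 3 → Mut (VB j) (HB j) n (vx n i c) (vx n i 1)) ∧
    (∀ c, c < 3 → Mut (VB j) (HB j) n (vx n (i + 1) c) (vx n i 1)) := by
  have r : Mut (VB j) (HB j) n (vx n i 1) (vx n i 1) := ⟨reach_refl _, reach_refl _⟩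
  have key : ∀ c, c = 0 ∨ c = 2 → Mut (VB j) (HB j) n (vx n i c) (vx n i 1) ∧
      Mut (VB j) (HB j) n (vx n (i + 1) c) (vx n i 1) ∧
      Mut (VB j) (HB j) n (vx n (i + 1) 1) (vx n i 1) := by
    intro c hc
    rcases faceB (n := n) hij hi hc with ⟨_, h1, h2, h3, h4⟩ | ⟨_, h1, h2, h3, h4⟩
    · have := mut_cycle4 h2 h3 h4 h1
      tauto
    · have := mut_cycle4 h1 h2 h3 h4
      tauto
  have k0 := key 0 (Or.inl rfl)
  have k2 := key 2 (Or.inr rfl)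
  constructor <;> intro c hc <;> interval_cases c <;> tauto

lemma strongB {j : ℕ} (hj : j + 2 ≤ n) (hj2 : 2 ≤ j) :
    StrongConnected (gArc (VB j) (HB j) n) := by
  have hm := head_mut (shapeB j) (show j < n by omega) hj2
  have e1 := reach_step (arcB (n := n) (j := j) (a := j) (b := 0) (c := j - 1) (d := 0) (by omega)
    (by omega) (by omega) (by omega) (by unfold arcN VB HB; omega))
  have e2 := reach_step (arcB (n := n) (j := j) (a := j - 1) (b := 2) (c := j) (d := 2) (by omega)
    (by omega) (by omega) (by omega) (by unfold arcN VB HB; omega))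
  have tj := (tail_mut_step (n := n) (le_refl j) (by omega)).1
  have hjo : Mut (VB j) (HB j) n (vx n j 1) (vx n 0 0) :=
    ⟨reach_trans (tj 0 (by omega)).2 (reach_trans e1 (hm (j - 1) (by omega) 0 (by omega)).1),
     reach_trans (hm (j - 1) (by omega) 2 (by omega)).2 (reach_trans e2 (tj 2 (by omega)).1)⟩
  have tail : ∀ i, j ≤ i → i < n → ∀ c, c < 3 → Mut (VB j) (HB j) n (vx n i c) (vx n 0 0) := by
    intro i hi
    induction i, hi using Nat.le_induction with
    | base => intro _ c hc; exact (tj c hc).trans' hjo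
    | succ i hi ih =>
      intro hin c hc
      exact ((tail_mut_step (n := n) hi hin).2 c hc).trans' (ih (by omega) 1 (by omega))
  apply strong_of_mut (o := vx n 0 0)
  intro x
  obtain ⟨i, c, hi, hc, rfl⟩ := exists_vx x
  by_cases hij : i < j
  · exact hm i hij c hc
  · exact tail i (by omega) hi c hc

lemma convexB {j : ℕ} (hj : j + 2 ≤ n) (hj2 : 2 ≤ j) :
    DConvex (gArc (VB j) (HB j) n) (headSet n j) := by
  apply convex_of_detour
  · exact ⟨vx n 0 0, (mem_head (by omega)).2 (by omega)⟩
  intro x hx y hy hxy z hz w hw hzw l g hg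
  obtain ⟨a, b, ha, hb, rfl⟩ := exists_vx x
  obtain ⟨a', b', ha', hb', rfl⟩ := exists_vx y
  obtain ⟨c, d, hc, hd, rfl⟩ := exists_vx z
  obtain ⟨c', d', hc', hd', rfl⟩ := exists_vx w
  rw [mem_head (by omega)] at hx hy hz hw
  rw [gArc_vx ha hb ha' hb'] at hxy
  rw [gArc_vx hc hd hc' hd'] at hzw
  unfold arcN VB HB at hxy hzw
  have e1 : a = j - 1 ∧ b' = b ∧ a' = j ∧ b ≠ 0 := by omega
  obtain ⟨rfl, rfl, rfl, hb0⟩ := e1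
  have e2 : c = a' ∧ c' = a' - 1 ∧ d' = 0 ∧ d = 0 := by omega
  obtain ⟨rfl, rfl, rfl, rfl⟩ := e2
  have hl : 3 ≤ l := by
    by_contra hlt
    have : l < 3 := by omega
    interval_cases l
    · have := walk_cases0 hg
      rw [vx_inj (by omega) (by omega) (by omega) (by omega)] at this
      omega
    · have := walk_cases1 hg
      rw [gArc_vx (by omega) (by omega) (by omega) (by omega)] at this
      unfold arcN VB HB at this
      omega
    · obtain ⟨w, h1, h2⟩ := walk_cases2 hg
      obtain ⟨p, q, hp, hq, rfl⟩ := exists_vx w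
      rw [gArc_vx (by omega) (by omega) (by omega) (by omega)] at h1 h2
      unfold arcN VB HB at h1 h2
      omega
  have f1 := arcB (n := n) (j := c) (a := c - 1) (b := 1) (c := c - 2) (d := 1) (by omega)
    (by omega) (by omega) (by omega) (by unfold arcN VB HB; omega)
  have f2 := arcB (n := n) (j := c) (a := c - 2) (b := 1) (c := c - 2) (d := 0) (by omega)
    (by omega) (by omega) (by omega) (by unfold arcN VB HB; omega)
  have f3 := arcB (n := n) (j := c) (a := c - 2) (b := 0) (c := c - 1) (d := 0) (by omega)
    (by omega) (by omega) (by omega) (by unfold arcN VB HB; omega)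
  have f4 := arcB (n := n) (j := c) (a := c - 1) (b := 2) (c := c - 2) (d := 2) (by omega)
    (by omega) (by omega) (by omega) (by unfold arcN VB HB; omega)
  have f5 := arcB (n := n) (j := c) (a := c - 2) (b := 2) (c := c - 2) (d := 1) (by omega)
    (by omega) (by omega) (by omega) (by unfold arcN VB HB; omega)
  have : b' = 1 ∨ b' = 2 := by omega
  rcases this with rfl | rfl
  · exact ⟨3, _, walk3 f1 f2 f3, by omega⟩
  · exact ⟨4, _, walk4 f4 f5 f2 f3, by omega⟩

/-- A tail arc inside a convex set gives a full strip. -/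
lemma strip_of_arc {j : ℕ} (hj : j + 2 ≤ n) {S : Set (Fin n × Fin 3)}
    (hS : DConvex (gArc (VB j) (HB j) n) S) {a b c d : ℕ} (ha : a < n) (hb : b < 3) (hc : c < n)
    (hd : d < 3) (hja : j ≤ a) (hjc : j ≤ c) (hA : arcN (VB j) (HB j) a b c d)
    (hx : vx n a b ∈ S) (hy : vx n c d ∈ S) : ∃ i, j ≤ i ∧ i + 1 < n ∧ Strip n S i := by
  have hcases : (a = c ∧ (b = 1 ∧ (d = 0 ∨ d = 2) ∨ d = 1 ∧ (b = 0 ∨ b = 2))) ∨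
      (b = d ∧ (c = a + 1 ∨ a = c + 1)) := by
    simp only [arcN] at hA
    omega
  rcases hcases with ⟨rfl, h⟩ | ⟨rfl, h⟩
  · have hpair : ∃ e, (e = 0 ∨ e = 2) ∧ vx n a e ∈ S ∧ vx n a 1 ∈ S := by
      rcases h with ⟨rfl, h⟩ | ⟨rfl, h⟩
      · exact ⟨d, h, hy, hx⟩
      · exact ⟨b, h, hx, hy⟩
    obtain ⟨e, he, m1, m2⟩ := hpair
    by_cases hlast : a + 1 < n
    · exact ⟨a, hja, hlast, stripB hja hlast he hS (Or.inl ⟨m1, m2⟩)⟩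
    · refine ⟨a - 1, by omega, by omega, stripB (c := e) (by omega) (by omega) he hS ?_⟩
      rw [show a - 1 + 1 = a by omega]
      exact Or.inr (Or.inr (Or.inl ⟨m2, m1⟩))
  · have hpair : ∃ i, j ≤ i ∧ i + 1 < n ∧ vx n i b ∈ S ∧ vx n (i + 1) b ∈ S := by
      rcases h with rfl | rfl
      · exact ⟨a, hja, hc, hx, hy⟩
      · exact ⟨c, hjc, ha, hy, hx⟩
    obtain ⟨i, h1, h2, m1, m2⟩ := hpair
    refine ⟨i, h1, h2, ?_⟩
    by_cases hb1 : b = 1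
    · subst hb1
      exact stripB (c := 0) h1 h2 (Or.inl rfl) hS (Or.inr (Or.inl ⟨m1, m2⟩))
    · exact stripB (c := b) h1 h2 (by omega) hS (Or.inr (Or.inr (Or.inr ⟨m2, m1⟩)))

lemma bigB {j : ℕ} (hj : j + 2 ≤ n) (hj2 : 2 ≤ j) (S : Set (Fin n × Fin 3))
    (hS : DConvex (gArc (VB j) (HB j) n) S) (hnt : ∀ x ∈ S, ∃ y ∈ S, x ≠ y)
    (hx : ∃ x ∈ S, j ≤ x.1.val) : S = Set.univ := by
  have hs := strongB hj hj2
  obtain ⟨x, hx, hxj⟩ := hx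
  obtain ⟨i, c, hi, hc, rfl⟩ := exists_vx x
  rw [vx_fst hi] at hxj
  have hstrip : ∃ i, j ≤ i ∧ i + 1 < n ∧ Strip n S i := by
    obtain ⟨i1, c1, hi1, hc1, hA1, hm1⟩ := out_coord hs hS hnt hi hc hx
    obtain ⟨i2, c2, hi2, hc2, hA2, hm2⟩ := in_coord hs hS hnt hi hc hx
    by_cases h1 : j ≤ i1
    · exact strip_of_arc hj hS hi hc hi1 hc1 hxj h1 hA1 hx hm1
    · have h2 : j ≤ i2 := by
        unfold arcN VB HB at hA1 hA2
        omega
      exact strip_of_arc hj hS hi2 hc2 hi hc h2 hxj hA2 hm2 hx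
  obtain ⟨i0, h1, h2, h3⟩ := hstrip
  have hall := strip_all h1 h2 hS h3
  have htail : ∀ a b, j ≤ a → a < n → b < 3 → vx n a b ∈ S := by
    intro a b hja ha hb
    by_cases hlast : a + 1 < n
    · exact (hall a hja hlast b hb).1
    · have := (hall (a - 1) (by omega) (by omega) b hb).2
      rwa [show a - 1 + 1 = a by omega] at this
  obtain ⟨p0, _, p2⟩ := ring_fill hS (i := j) (p := 0) (q := 2) (b := vx n (j - 1) 0)
    (c := vx n (j - 1) 1) (d := vx n (j - 1) 2) (by omega) (by omega) (by omega)
    (arcB (by omega) (by omega) (by omega) (by omega) (by unfold arcN VB HB; omega))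
    (arcB (by omega) (by omega) (by omega) (by omega) (by unfold arcN VB HB; omega))
    (arcB (by omega) (by omega) (by omega) (by omega) (by unfold arcN VB HB; omega))
    (arcB (by omega) (by omega) (by omega) (by omega) (by unfold arcN VB HB; omega))
    (htail j 0 le_rfl (by omega) (by omega)) (htail j 2 le_rfl (by omega) (by omega))
    (by unfold arcN VB HB; omega)
  have hf := head_fill (shapeB j) (by omega) hj2 hS p0 p2
  ext x
  refine ⟨fun _ => Set.mem_univ _, fun _ => ?_⟩
  obtain ⟨a, b, ha, hb, rfl⟩ := exists_vx x
  by_cases haj : a < j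
  · exact hf a b haj hb
  · exact htail a b (by omega) ha hb

end GridAux

/-- Realizable values `3j` in the strong convexity spectrum of `P_n □ P_3`. -/
theorem three_j_mem_strongConvexitySpectrum_grid_n3 (n : ℕ) (hn : 2 ≤ n)
    (j : ℕ) (hjl : 2 ≤ j) (hju : j ≤ n - 1) :
    3 * j ∈ strongConvexitySpectrum (gridGraph n 3) := by
  have : NeZero n := ⟨by omega⟩
  by_cases h : j + 1 = n
  · exact ⟨GridAux.gArc (GridAux.VA j) (GridAux.HA j) n, GridAux.gArc_orientation _ _ _,
      GridAux.strongA h hjl,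
      GridAux.con_eq (by omega) hjl (GridAux.convexA h hjl) (GridAux.bigA h hjl)⟩
  · have h' : j + 2 ≤ n := by omega
    exact ⟨GridAux.gArc (GridAux.VB j) (GridAux.HB j) n, GridAux.gArc_orientation _ _ _,
      GridAux.strongB h' hjl,
      GridAux.con_eq (by omega) hjl (GridAux.convexB h' hjl) (GridAux.bigB h' hjl)⟩
end

section
/- Let n ≥ 2 be an integer and let G be the grid P_n □ P_3. If j is an integer such that 2 ≤ j ≤ n−2, then 3j+2 ∈ S_SC(G). -/
/-!  Common definitions: oriented graphs, geodesic convexity, convexity number,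
strong convexity spectrum, and grid graphs. -/

variable {V : Type*}

namespace GridSpec

/-- Arc relation in natural-number coordinates. `H i r` means that the horizontal edge
between `(i,r)` and `(i+1,r)` points to `(i+1,r)`; `U i r` means that the vertical edge between
`(i,r)` and `(i,r+1)` points to `(i,r+1)`. -/
def arc (n : ℕ) (H U : ℕ → ℕ → Prop) (i r i' r' : ℕ) : Prop :=
  i < n ∧ i' < n ∧ r < 3 ∧ r' < 3 ∧
  ((r' = r ∧ i' = i + 1 ∧ H i r) ∨ (r' = r ∧ i = i' + 1 ∧ ¬ H i' r) ∨
   (i' = i ∧ r' = r + 1 ∧ U i r) ∨ (i' = i ∧ r = r' + 1 ∧ ¬ U i r'))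

def gArc (n : ℕ) (H U : ℕ → ℕ → Prop) (x y : Fin n × Fin 3) : Prop :=
  arc n H U x.1 x.2 y.1 y.2

theorem arc_asymm {n : ℕ} {H U : ℕ → ℕ → Prop} {i r i' r' : ℕ} (h : arc n H U i r i' r') :
    ¬ arc n H U i' r' i r := by
  unfold arc at *
  rintro ⟨_, _, _, _, h'⟩
  obtain ⟨_, _, _, _, h⟩ := h
  rcases h with ⟨a, b, c⟩ | ⟨a, b, c⟩ | ⟨a, b, c⟩ | ⟨a, b, c⟩ <;>
  rcases h' with ⟨d, e, f⟩ | ⟨d, e, f⟩ | ⟨d, e, f⟩ | ⟨d, e, f⟩ <;> first | omega | (subst_vars; contradiction)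

theorem arc_parity {n : ℕ} {H U : ℕ → ℕ → Prop} {i r i' r' : ℕ} (h : arc n H U i r i' r') :
    (i + r + i' + r') % 2 = 1 := by
  unfold arc at *
  obtain ⟨_, _, _, _, h⟩ := h
  rcases h with ⟨a, b, c⟩ | ⟨a, b, c⟩ | ⟨a, b, c⟩ | ⟨a, b, c⟩ <;> omega

theorem gArc_orientation (n : ℕ) (H U : ℕ → ℕ → Prop) :
    IsOrientation (gridGraph n 3) (gArc n H U) := by
  refine ⟨?_, ?_, fun x y h => arc_asymm h⟩
  · rintro ⟨x1, x2⟩ ⟨y1, y2⟩ ⟨_, _, _, _, h⟩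
    simp only [gridGraph, SimpleGraph.boxProd_adj, SimpleGraph.pathGraph_adj, Fin.ext_iff] at *
    rcases h with ⟨a, b, c⟩ | ⟨a, b, c⟩ | ⟨a, b, c⟩ | ⟨a, b, c⟩ <;> omega
  · rintro ⟨x1, x2⟩ ⟨y1, y2⟩ h
    simp only [gridGraph, SimpleGraph.boxProd_adj, SimpleGraph.pathGraph_adj, Fin.ext_iff] at h
    have h1 := x1.2
    have h2 := x2.2
    have h3 := y1.2
    have h4 := y2.2
    simp only [gArc, arc]
    rcases h with ⟨a | a, b⟩ | ⟨a | a, b⟩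
    · by_cases hh : H x1 x2
      · left; exact ⟨h1, h3, h2, h4, Or.inl ⟨b.symm, a.symm, hh⟩⟩
      · right; exact ⟨h3, h1, h4, h2, Or.inr (Or.inl ⟨b, a.symm, b ▸ hh⟩)⟩
    · by_cases hh : H y1 y2
      · right; exact ⟨h3, h1, h4, h2, Or.inl ⟨b, a.symm, hh⟩⟩
      · left; exact ⟨h1, h3, h2, h4, Or.inr (Or.inl ⟨b.symm, a.symm, b ▸ hh⟩)⟩
    · by_cases hh : U x1 x2
      · left; exact ⟨h1, h3, h2, h4, Or.inr (Or.inr (Or.inl ⟨b.symm, a.symm, hh⟩))⟩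
      · right; exact ⟨h3, h1, h4, h2, Or.inr (Or.inr (Or.inr ⟨b, a.symm, b ▸ hh⟩))⟩
    · by_cases hh : U y1 y2
      · right; exact ⟨h3, h1, h4, h2, Or.inr (Or.inr (Or.inl ⟨b, a.symm, hh⟩))⟩
      · left; exact ⟨h1, h3, h2, h4, Or.inr (Or.inr (Or.inr ⟨b.symm, a.symm, b ▸ hh⟩))⟩

/-! ### Walks -/

/-- There is a walk of length `k`. -/
def W (A : V → V → Prop) (k : ℕ) (u v : V) : Prop := ∃ f, IsDirWalk A k f u v

theorem W.refl {A : V → V → Prop} (u : V) : W A 0 u u := ⟨fun _ => u, rfl, rfl, by simp⟩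

theorem W.cons {A : V → V → Prop} {k : ℕ} {u v w : V} (h : A u v) (h' : W A k v w) :
    W A (k + 1) u w := by
  obtain ⟨f, h0, hk, hf⟩ := h'
  refine ⟨fun i => if i = 0 then u else f (i - 1), by simp, by simp [hk], ?_⟩
  intro i hi
  rcases i with _ | i
  · simpa [h0] using h
  · simpa using hf i (by omega)

theorem W.zero {A : V → V → Prop} {u v : V} (h : W A 0 u v) : u = v := by
  obtain ⟨f, h0, hk, hf⟩ := h
  exact h0.symm.trans hk

theorem W.succ {A : V → V → Prop} {k : ℕ} {u w : V} (h : W A (k + 1) u w) :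
    ∃ v, A u v ∧ W A k v w := by
  obtain ⟨f, h0, hk, hf⟩ := h
  refine ⟨f 1, h0 ▸ hf 0 (by omega), fun i => f (i + 1), rfl, hk, fun i hi => hf (i+1) (by omega)⟩

theorem W.trans {A : V → V → Prop} {k l : ℕ} {u v w : V} (h : W A k u v) (h' : W A l v w) :
    W A (k + l) u w := by
  induction k generalizing u with
  | zero => rw [W.zero h, Nat.zero_add]; exact h'
  | succ k ih =>
    obtain ⟨x, hx, hw⟩ := W.succ h
    have := W.cons hx (ih hw)
    rwa [show k + 1 + l = k + l + 1 by omega]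

theorem W.seg {A : V → V → Prop} {k : ℕ} {f : ℕ → V} {u v : V} (h : IsDirWalk A k f u v)
    {i l : ℕ} (hil : i ≤ l) (hl : l ≤ k) : W A (l - i) (f i) (f l) :=
  ⟨fun m => f (i + m), by simp, by simp [Nat.add_sub_cancel' hil],
    fun m hm => h.2.2 (i + m) (by omega)⟩

theorem geod_seg {A : V → V → Prop} {k : ℕ} {f : ℕ → V} {u v : V} (h : IsGeodesic A k f u v)
    {i l m : ℕ} (hil : i ≤ l) (hl : l ≤ k) (hW : W A m (f i) (f l)) : l - i ≤ m := by
  have h1 := W.seg h.1 (Nat.zero_le i) (hil.trans hl)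
  have h2 := W.seg h.1 hl le_rfl
  have h3 := (h1.trans hW).trans h2
  rw [h.1.1, h.1.2.1] at h3
  obtain ⟨g, hg⟩ := h3
  have := h.2 _ g hg
  omega

theorem exists_geod {A : V → V → Prop} (hA : StrongConnected A) (u v : V) :
    ∃ k f, IsGeodesic A k f u v := by
  classical
  have h : ∃ k, ∃ f, IsDirWalk A k f u v := hA u v
  obtain ⟨f, hf⟩ := Nat.find_spec h
  exact ⟨Nat.find h, f, hf, fun k' f' hf' => Nat.find_min' h ⟨f', hf'⟩⟩

theorem W.parity {n : ℕ} {H U : ℕ → ℕ → Prop} {k : ℕ} {u v : Fin n × Fin 3}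
    (h : W (gArc n H U) k u v) : ((u.1 : ℕ) + u.2 + v.1 + v.2 + k) % 2 = 0 := by
  induction k generalizing u with
  | zero => rw [W.zero h]; omega
  | succ k ih =>
    obtain ⟨x, hx, hw⟩ := W.succ h
    have := ih hw
    have := arc_parity hx
    omega

theorem convex_out {A : V → V → Prop} (hA : StrongConnected A) {C : Set V} (hC : DConvex A C)
    {x y : V} (hx : x ∈ C) (hy : y ∈ C) (hxy : y ≠ x) : ∃ z ∈ C, A x z := by
  obtain ⟨k, f, hf⟩ := exists_geod hA x y
  have hk : k ≠ 0 := by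
    rintro rfl
    exact hxy (hf.1.2.1.symm.trans hf.1.1)
  refine ⟨f 1, hC.2 x hx y hy k f hf 1 (by omega), ?_⟩
  have := hf.1.2.2 0 (by omega)
  rwa [hf.1.1] at this

theorem convex_in {A : V → V → Prop} (hA : StrongConnected A) {C : Set V} (hC : DConvex A C)
    {x y : V} (hx : x ∈ C) (hy : y ∈ C) (hxy : y ≠ x) : ∃ z ∈ C, A z x := by
  obtain ⟨k, f, hf⟩ := exists_geod hA y x
  have hk : k ≠ 0 := by
    rintro rfl
    exact hxy (hf.1.1.symm.trans hf.1.2.1)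
  refine ⟨f (k - 1), hC.2 y hy x hx k f hf (k - 1) (by omega), ?_⟩
  have := hf.1.2.2 (k - 1) (by omega)
  rwa [Nat.sub_add_cancel (by omega), hf.1.2.1] at this

/-- A criterion for convexity: any excursion from `x ∈ S` outside of `S` is longer than
some walk having the same ends. -/
theorem convex_of_potential {A : V → V → Prop} {S : Set V} (hne : S.Nonempty)
    (h : ∀ x ∈ S, ∃ κ : V → ℕ, (∀ t, t ∉ S → A x t → κ t ≤ 1) ∧
      (∀ t t', t ∉ S → t' ∉ S → A t t' → κ t' ≤ κ t + 1) ∧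
      (∀ t, ∀ y ∈ S, (∃ t' ∉ S, A x t') → t ∉ S → A t y → ∃ m ≤ κ t, W A m x y)) :
    DConvex A S := by
  refine ⟨hne, fun u hu v hv k f hf => ?_⟩
  by_contra! hcon
  classical
  -- first exit
  have hex : ∃ i, i ≤ k ∧ f i ∉ S := hcon
  obtain ⟨hak, haS⟩ := Nat.find_spec hex
  have hamin := fun m => Nat.find_min hex (m := m)
  set a := Nat.find hex with ha
  have ha0 : a ≠ 0 := by
    intro h0
    rw [h0, hf.1.1] at haS
    exact haS hu
  obtain ⟨i, hi⟩ := Nat.exists_eq_succ_of_ne_zero ha0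
  rw [Nat.succ_eq_add_one] at hi
  have hiS : f i ∈ S := by
    by_contra hcon
    exact hamin i (by omega) ⟨by omega, hcon⟩
  -- first return
  have hret : ∃ l, i < l ∧ f l ∈ S := ⟨k, by omega, by rw [hf.1.2.1]; exact hv⟩
  obtain ⟨hl, hlS⟩ := Nat.find_spec hret
  have hlmin := fun m => Nat.find_min hret (m := m)
  have hlk : Nat.find hret ≤ k := Nat.find_min' hret ⟨by omega, by rw [hf.1.2.1]; exact hv⟩
  set l := Nat.find hret with hldef
  have hout : ∀ m, i < m → m < l → f m ∉ S := fun m h1 h2 h3 => hlmin m h2 ⟨h1, h3⟩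
  have hl1 : i + 1 ≠ l := by
    intro h1
    rw [hi] at haS
    rw [← h1] at hlS
    exact haS hlS
  obtain ⟨κ, h1, h2, h3⟩ := h (f i) hiS
  have hexit : A (f i) (f (i + 1)) := hf.1.2.2 i (by omega)
  have hκ : ∀ d, i + 1 + d < l → κ (f (i + 1 + d)) ≤ 1 + d := by
    intro d
    induction d with
    | zero => intro hd; exact h1 _ (hout _ (by omega) (by omega)) hexit
    | succ d ih =>
      intro hd
      have := h2 (f (i + 1 + d)) (f (i + 1 + d + 1)) (hout _ (by omega) (by omega))
        (hout _ (by omega) (by omega)) (hf.1.2.2 _ (by omega))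
      have := ih (by omega)
      rw [← add_assoc]
      omega
  have hk1 := hκ (l - 1 - (i + 1)) (by omega)
  rw [show i + 1 + (l - 1 - (i + 1)) = l - 1 by omega] at hk1
  have harc := hf.1.2.2 (l - 1) (by omega)
  rw [show l - 1 + 1 = l by omega] at harc
  obtain ⟨m, hm, hW⟩ := h3 (f (l - 1)) (f l) hlS ⟨f (i + 1), hout _ (by omega) (by omega), hexit⟩
    (hout _ (by omega) (by omega)) harc
  have := geod_seg hf hl.le hlk hW
  omega

/-- Membership in natural-number coordinates. -/
def Mem {n : ℕ} (C : Set (Fin n × Fin 3)) (i r : ℕ) : Prop :=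
  ∃ (hi : i < n) (hr : r < 3), ((⟨i, hi⟩, ⟨r, hr⟩) : Fin n × Fin 3) ∈ C

theorem mem_iff {n : ℕ} (C : Set (Fin n × Fin 3)) (x : Fin n × Fin 3) :
    x ∈ C ↔ Mem C x.1 x.2 := by
  constructor
  · intro h; exact ⟨x.1.2, x.2.2, h⟩
  · rintro ⟨_, _, h⟩; exact h

theorem closure3 {n : ℕ} {H U : ℕ → ℕ → Prop} {C : Set (Fin n × Fin 3)}
    (hC : DConvex (gArc n H U) C) {i0 r0 i1 r1 i2 r2 i3 r3 : ℕ}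
    (h0 : Mem C i0 r0) (h3 : Mem C i3 r3) (a1 : arc n H U i0 r0 i1 r1) (a2 : arc n H U i1 r1 i2 r2)
    (a3 : arc n H U i2 r2 i3 r3) (hn : ¬ arc n H U i0 r0 i3 r3) : Mem C i1 r1 ∧ Mem C i2 r2 := by
  obtain ⟨hi0, hr0, h0⟩ := h0
  obtain ⟨hi3, hr3, h3⟩ := h3
  have hi1 := a1.2.1
  have hr1 := a1.2.2.2.1
  have hi2 := a2.2.1
  have hr2 := a2.2.2.2.1
  let f : ℕ → Fin n × Fin 3 := fun m => match m with
    | 0 => (⟨i0, hi0⟩, ⟨r0, hr0⟩)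
    | 1 => (⟨i1, hi1⟩, ⟨r1, hr1⟩)
    | 2 => (⟨i2, hi2⟩, ⟨r2, hr2⟩)
    | _ => (⟨i3, hi3⟩, ⟨r3, hr3⟩)
  have hw : IsDirWalk (gArc n H U) 3 f (⟨i0, hi0⟩, ⟨r0, hr0⟩) (⟨i3, hi3⟩, ⟨r3, hr3⟩) := by
    refine ⟨rfl, rfl, fun i hi => ?_⟩
    interval_cases i
    exacts [a1, a2, a3]
  have hg : IsGeodesic (gArc n H U) 3 f (⟨i0, hi0⟩, ⟨r0, hr0⟩) (⟨i3, hi3⟩, ⟨r3, hr3⟩) := by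
    refine ⟨hw, fun k g hgw => ?_⟩
    by_contra! hk
    have p1 := W.parity (⟨f, hw⟩ : W _ _ _ _)
    have p2 := W.parity (⟨g, hgw⟩ : W _ _ _ _)
    have : k = 1 := by omega
    subst this
    obtain ⟨v, hv, hv'⟩ := W.succ (⟨g, hgw⟩ : W _ _ _ _)
    rw [W.zero hv'] at hv
    exact hn hv
  exact ⟨⟨hi1, hr1, hC.2 _ h0 _ h3 3 f hg 1 (by omega)⟩,
    ⟨hi2, hr2, hC.2 _ h0 _ h3 3 f hg 2 (by omega)⟩⟩

theorem closure4 {n : ℕ} {H U : ℕ → ℕ → Prop} {C : Set (Fin n × Fin 3)}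
    (hC : DConvex (gArc n H U) C) {i0 r0 i1 r1 i2 r2 i3 r3 i4 r4 : ℕ}
    (h0 : Mem C i0 r0) (h4 : Mem C i4 r4) (a1 : arc n H U i0 r0 i1 r1) (a2 : arc n H U i1 r1 i2 r2)
    (a3 : arc n H U i2 r2 i3 r3) (a4 : arc n H U i3 r3 i4 r4) (hne : ¬ (i0 = i4 ∧ r0 = r4))
    (hn : ∀ i r, arc n H U i0 r0 i r → ¬ arc n H U i r i4 r4) :
    Mem C i1 r1 ∧ Mem C i2 r2 ∧ Mem C i3 r3 := by
  obtain ⟨hi0, hr0, h0⟩ := h0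
  obtain ⟨hi4, hr4, h4⟩ := h4
  have hi1 := a1.2.1
  have hr1 := a1.2.2.2.1
  have hi2 := a2.2.1
  have hr2 := a2.2.2.2.1
  have hi3 := a3.2.1
  have hr3 := a3.2.2.2.1
  let f : ℕ → Fin n × Fin 3 := fun m => match m with
    | 0 => (⟨i0, hi0⟩, ⟨r0, hr0⟩)
    | 1 => (⟨i1, hi1⟩, ⟨r1, hr1⟩)
    | 2 => (⟨i2, hi2⟩, ⟨r2, hr2⟩)
    | 3 => (⟨i3, hi3⟩, ⟨r3, hr3⟩)
    | _ => (⟨i4, hi4⟩, ⟨r4, hr4⟩)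
  have hw : IsDirWalk (gArc n H U) 4 f (⟨i0, hi0⟩, ⟨r0, hr0⟩) (⟨i4, hi4⟩, ⟨r4, hr4⟩) := by
    refine ⟨rfl, rfl, fun i hi => ?_⟩
    interval_cases i
    exacts [a1, a2, a3, a4]
  have hg : IsGeodesic (gArc n H U) 4 f (⟨i0, hi0⟩, ⟨r0, hr0⟩) (⟨i4, hi4⟩, ⟨r4, hr4⟩) := by
    refine ⟨hw, fun k g hgw => ?_⟩
    by_contra! hk
    have p1 := W.parity (⟨f, hw⟩ : W _ _ _ _)
    have p2 := W.parity (⟨g, hgw⟩ : W _ _ _ _)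
    have : k = 0 ∨ k = 2 := by omega
    rcases this with rfl | rfl
    · have := W.zero (⟨g, hgw⟩ : W _ _ _ _)
      simp only [Prod.mk.injEq, Fin.mk.injEq] at this
      exact hne this
    · obtain ⟨v, hv, hv'⟩ := W.succ (⟨g, hgw⟩ : W _ _ _ _)
      obtain ⟨w, hw1, hw'⟩ := W.succ hv'
      rw [W.zero hw'] at hw1
      exact hn _ _ hv hw1
  exact ⟨⟨hi1, hr1, hC.2 _ h0 _ h4 4 f hg 1 (by omega)⟩,
    ⟨hi2, hr2, hC.2 _ h0 _ h4 4 f hg 2 (by omega)⟩,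
    ⟨hi3, hr3, hC.2 _ h0 _ h4 4 f hg 3 (by omega)⟩⟩

/-! ### Propagation along directed faces -/

/-- The face with lower-left corner `(i,r)` is a directed cycle. -/
def Face (H U : ℕ → ℕ → Prop) (i r : ℕ) : Prop :=
  (H i r ↔ ¬ H i (r + 1)) ∧ (H i r ↔ ¬ U i r) ∧ (H i r ↔ U (i + 1) r)

/-- `P` is closed under completing directed 4-cycles from an arc. -/
def CycClosed (n : ℕ) (H U : ℕ → ℕ → Prop) (P : ℕ → ℕ → Prop) : Prop :=
  ∀ i0 r0 i1 r1 i2 r2 i3 r3, arc n H U i0 r0 i1 r1 → arc n H U i1 r1 i2 r2 →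
    arc n H U i2 r2 i3 r3 → arc n H U i3 r3 i0 r0 → P i0 r0 → P i1 r1 → P i2 r2 ∧ P i3 r3

theorem face_arcs {n : ℕ} {H U : ℕ → ℕ → Prop} {i r : ℕ} (hi : i + 1 < n) (hr : r < 2)
    (hF : Face H U i r) :
    (arc n H U i r (i+1) r ∧ arc n H U (i+1) r (i+1) (r+1) ∧ arc n H U (i+1) (r+1) i (r+1) ∧
      arc n H U i (r+1) i r) ∨
    (arc n H U (i+1) r i r ∧ arc n H U (i+1) (r+1) (i+1) r ∧ arc n H U i (r+1) (i+1) (r+1) ∧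
      arc n H U i r i (r+1)) := by
  obtain ⟨h1, h2, h3⟩ := hF
  have : i < n := by omega
  have : r < 3 := by omega
  have : r + 1 < 3 := by omega
  by_cases h : H i r
  · left
    have h4 := h1.1 h
    have h5 := h2.1 h
    have h6 := h3.1 h
    simp [arc, *]
  · right
    have h4 : H i (r+1) := by tauto
    have h5 : U i r := by tauto
    have h6 : ¬ U (i+1) r := by tauto
    simp [arc, *]

theorem face_closed {n : ℕ} {H U : ℕ → ℕ → Prop} {P : ℕ → ℕ → Prop} (hP : CycClosed n H U P)
    {i r : ℕ} (hi : i + 1 < n) (hr : r < 2) (hF : Face H U i r)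
    (h : (P i r ∧ P i (r+1)) ∨ (P (i+1) r ∧ P (i+1) (r+1)) ∨ (P i r ∧ P (i+1) r) ∨
      (P i (r+1) ∧ P (i+1) (r+1))) :
    P i r ∧ P i (r+1) ∧ P (i+1) r ∧ P (i+1) (r+1) := by
  rcases face_arcs hi hr hF with ⟨a, b, c, d⟩ | ⟨a, b, c, d⟩
  · have e1 := hP _ _ _ _ _ _ _ _ a b c d
    have e2 := hP _ _ _ _ _ _ _ _ b c d a
    have e3 := hP _ _ _ _ _ _ _ _ c d a b
    have e4 := hP _ _ _ _ _ _ _ _ d a b c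
    tauto
  · have e1 := hP _ _ _ _ _ _ _ _ a d c b
    have e2 := hP _ _ _ _ _ _ _ _ d c b a
    have e3 := hP _ _ _ _ _ _ _ _ c b a d
    have e4 := hP _ _ _ _ _ _ _ _ b a d c
    tauto

theorem propagate {n : ℕ} {H U : ℕ → ℕ → Prop} {P : ℕ → ℕ → Prop} (hP : CycClosed n H U P)
    {a b : ℕ} (hab : a < b) (hb : b < n) (hF : ∀ i r, a ≤ i → i < b → r < 2 → Face H U i r)
    {i r : ℕ} (hai : a ≤ i) (hib : i ≤ b) (hr : r < 2) (h1 : P i r) (h2 : P i (r + 1)) :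
    ∀ i r, a ≤ i → i ≤ b → r < 3 → P i r := by
  have fc : ∀ i r, a ≤ i → i < b → r < 2 → _ := fun i r h1 h2 h3 =>
    face_closed hP (by omega : i + 1 < n) h3 (hF i r h1 h2 h3)
  -- a full column gives neighbouring full columns
  have up : ∀ i, a ≤ i → i < b → (P i 0 ∧ P i 1 ∧ P i 2) → (P (i+1) 0 ∧ P (i+1) 1 ∧ P (i+1) 2) := by
    intro i h1 h2 h3
    have := fc i 0 h1 h2 (by omega) (Or.inl ⟨h3.1, h3.2.1⟩)
    have := fc i 1 h1 h2 (by omega) (Or.inl ⟨h3.2.1, h3.2.2⟩)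
    tauto
  have down : ∀ i, a ≤ i → i < b → (P (i+1) 0 ∧ P (i+1) 1 ∧ P (i+1) 2) → (P i 0 ∧ P i 1 ∧ P i 2) := by
    intro i h1 h2 h3
    have := fc i 0 h1 h2 (by omega) (Or.inr (Or.inl ⟨h3.1, h3.2.1⟩))
    have := fc i 1 h1 h2 (by omega) (Or.inr (Or.inl ⟨h3.2.1, h3.2.2⟩))
    tauto
  have two : ∀ i, a ≤ i → i < b → ∀ r < 2, P i r → P i (r+1) → (P i 0 ∧ P i 1 ∧ P i 2) := by
    intro i h1 h2 r hr h3 h4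
    have e0 := fc i r h1 h2 hr (Or.inl ⟨h3, h4⟩)
    interval_cases r
    · have := fc i 1 h1 h2 (by omega) (Or.inr (Or.inr (Or.inl ⟨h4, e0.2.2.2⟩)))
      tauto
    · have := fc i 0 h1 h2 (by omega) (Or.inr (Or.inr (Or.inr ⟨h3, e0.2.2.1⟩)))
      tauto
  have start : ∃ i, a ≤ i ∧ i < b ∧ (P i 0 ∧ P i 1 ∧ P i 2) := by
    rcases Nat.lt_or_ge i b with h | h
    · exact ⟨i, hai, h, two i hai h r hr h1 h2⟩
    · have : i = (b - 1) + 1 := by omega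
      rw [this] at h1 h2
      have e0 := fc (b - 1) r (by omega) (by omega) hr (Or.inr (Or.inl ⟨h1, h2⟩))
      exact ⟨b - 1, by omega, by omega, two _ (by omega) (by omega) r hr e0.1 e0.2.1⟩
  obtain ⟨s, has, hsb, hs⟩ := start
  have hup : ∀ d, s + d ≤ b → (P (s+d) 0 ∧ P (s+d) 1 ∧ P (s+d) 2) := by
    intro d
    induction d with
    | zero => intro _; exact hs
    | succ d ih => intro hd; exact up (s+d) (by omega) (by omega) (ih (by omega))
  have hdown : ∀ d, a + d ≤ s → (P (s-d) 0 ∧ P (s-d) 1 ∧ P (s-d) 2) := by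
    intro d
    induction d with
    | zero => intro _; exact hs
    | succ d ih =>
      intro hd
      refine down (s-(d+1)) (by omega) (by omega) ?_
      rw [show s - (d+1) + 1 = s - d by omega]
      exact ih (by omega)
  intro i r h1 h2 h3
  have : P i 0 ∧ P i 1 ∧ P i 2 := by
    rcases le_total s i with h | h
    · have := hup (i - s) (by omega)
      rwa [show s + (i - s) = i by omega] at this
    · have := hdown (s - i) (by omega)
      rwa [show s - (s - i) = i by omega] at this
  interval_cases r <;> tauto

theorem cycClosed_convex {n : ℕ} {H U : ℕ → ℕ → Prop} {C : Set (Fin n × Fin 3)}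
    (hC : DConvex (gArc n H U) C) : CycClosed n H U (Mem C) := by
  intro i0 r0 i1 r1 i2 r2 i3 r3 a b c d h0 h1
  exact closure3 hC h1 h0 b c d (arc_asymm a)

/-- Reachability in coordinates. -/
def Rch (n : ℕ) (H U : ℕ → ℕ → Prop) : ℕ × ℕ → ℕ × ℕ → Prop :=
  Relation.ReflTransGen (fun x y => arc n H U x.1 x.2 y.1 y.2)

/-- Mutual reachability with a base point. -/
def Mut (n : ℕ) (H U : ℕ → ℕ → Prop) (o : ℕ × ℕ) (i r : ℕ) : Prop :=
  Rch n H U o (i, r) ∧ Rch n H U (i, r) o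

theorem Mut.mid {n : ℕ} {H U : ℕ → ℕ → Prop} {o : ℕ × ℕ} {i r i' r' i'' r'' : ℕ}
    (h : Mut n H U o i r) (h' : Mut n H U o i'' r'')
    (h1 : Rch n H U (i, r) (i', r')) (h2 : Rch n H U (i', r') (i'', r'')) : Mut n H U o i' r' :=
  ⟨h.1.trans h1, h2.trans h'.2⟩

theorem Rch.single {n : ℕ} {H U : ℕ → ℕ → Prop} {i r i' r' : ℕ} (h : arc n H U i r i' r') :
    Rch n H U (i, r) (i', r') := Relation.ReflTransGen.single h

theorem Rch.trans {n : ℕ} {H U : ℕ → ℕ → Prop} {x y z : ℕ × ℕ} (h : Rch n H U x y)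
    (h' : Rch n H U y z) : Rch n H U x z := Relation.ReflTransGen.trans h h'

theorem cycClosed_mut (n : ℕ) (H U : ℕ → ℕ → Prop) (o : ℕ × ℕ) : CycClosed n H U (Mut n H U o) := by
  intro i0 r0 i1 r1 i2 r2 i3 r3 a b c d h0 h1
  have b := Rch.single b
  have c := Rch.single c
  have d := Rch.single d
  exact ⟨Mut.mid h1 h0 b (c.trans d), Mut.mid h1 h0 (b.trans c) d⟩

theorem rch_lift {n : ℕ} {H U : ℕ → ℕ → Prop} {x y : ℕ × ℕ} (h : Rch n H U x y) :
    ∀ (hx1 : x.1 < n) (hx2 : x.2 < 3) (hy1 : y.1 < n) (hy2 : y.2 < 3),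
    DirReachable (gArc n H U) (⟨x.1, hx1⟩, ⟨x.2, hx2⟩) (⟨y.1, hy1⟩, ⟨y.2, hy2⟩) := by
  intro hx1 hx2 hy1 hy2
  show ∃ k, W _ _ _ _
  induction h using Relation.ReflTransGen.head_induction_on with
  | refl => exact ⟨0, W.refl _⟩
  | head h1 _ ih =>
    obtain ⟨k, hk⟩ := ih h1.2.1 h1.2.2.2.1
    exact ⟨k + 1, W.cons (by exact h1) hk⟩

theorem strong_of_mut {n : ℕ} {H U : ℕ → ℕ → Prop} (o : ℕ × ℕ)
    (h : ∀ i r, i < n → r < 3 → Mut n H U o i r) : StrongConnected (gArc n H U) := by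
  intro u v
  exact rch_lift ((h u.1 u.2 u.1.2 u.2.2).2.trans (h v.1 v.2 v.1.2 v.2.2).1) u.1.2 u.2.2 v.1.2 v.2.2

/-! ### The convex set -/

/-- The set consisting of the first `k + 2` columns and the two upper vertices of the next one. -/
def SS (n k : ℕ) : Set (Fin n × Fin 3) :=
  {x | (x.1 : ℕ) ≤ k + 1 ∨ ((x.1 : ℕ) = k + 2 ∧ 1 ≤ (x.2 : ℕ))}

theorem SS_card {n k : ℕ} (hk : k + 4 ≤ n) : (SS n k).ncard = 3 * (k + 2) + 2 := by
  have h : SS n k = Set.range (fun m : Fin (3 * (k + 2) + 2) =>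
      ((⟨m / 3, by omega⟩, ⟨2 - m % 3, by omega⟩) : Fin n × Fin 3)) := by
    ext ⟨x, y⟩
    have hx := x.2
    have hy := y.2
    simp only [SS, Set.mem_ofPred_eq, Set.mem_range, Prod.mk.injEq, Fin.ext_iff]
    constructor
    · intro h
      exact ⟨⟨3 * x + (2 - y), by omega⟩, by simp only; omega, by simp only; omega⟩
    · rintro ⟨m, h1, h2⟩
      have := m.2
      omega
  rw [h, ← Set.image_univ, Set.ncard_image_of_injective]
  · simp
  · intro a b hab
    simp only [Prod.mk.injEq, Fin.ext_iff] at hab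
    apply Fin.ext
    omega

theorem spectrum_of {n k : ℕ} (hk : k + 4 ≤ n) {H U : ℕ → ℕ → Prop}
    (hst : StrongConnected (gArc n H U)) (hS : DConvex (gArc n H U) (SS n k))
    (hT : ∀ C, DConvex (gArc n H U) C → (∀ i r, Mem C i r → ∃ i' r', Mem C i' r' ∧ arc n H U i' r' i r) →
      (∀ i r, Mem C i r → ∃ i' r', Mem C i' r' ∧ arc n H U i r i' r') →
      ∀ i r, Mem C i r → ¬ (i ≤ k + 1 ∨ (i = k + 2 ∧ 1 ≤ r)) → ∀ i r, i < n → r < 3 → Mem C i r) :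
    3 * (k + 2) + 2 ∈ strongConvexitySpectrum (gridGraph n 3) := by
  refine ⟨gArc n H U, gArc_orientation n H U, hst, ?_⟩
  refine IsGreatest.csSup_eq ⟨⟨SS n k, hS, ?_, SS_card hk⟩, ?_⟩
  · intro h
    have : ((⟨k + 3, by omega⟩, 0) : Fin n × Fin 3) ∈ SS n k := by rw [h]; trivial
    simp [SS] at this
  · rintro _ ⟨C, hC, hCu, rfl⟩
    by_cases hsub : C ⊆ SS n k
    · rw [← SS_card hk]
      exact Set.ncard_le_ncard hsub (Set.toFinite _)
    · obtain ⟨x, hx, hxS⟩ := Set.not_subset.1 hsub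
      by_cases hss : C.Subsingleton
      · have := Set.ncard_le_one_iff_subsingleton.2 hss
        omega
      · exfalso
        rw [Set.not_subsingleton_iff] at hss
        apply hCu
        rw [Set.eq_univ_iff_forall]
        intro y
        rw [mem_iff]
        refine hT C hC ?_ ?_ x.1 x.2 ((mem_iff _ _).1 hx) hxS _ _ y.1.2 y.2.2
        · rintro i r ⟨hi, hr, hm⟩
          obtain ⟨w, hw, hne⟩ := hss.exists_ne ((⟨i, hi⟩, ⟨r, hr⟩) : Fin n × Fin 3)
          obtain ⟨z, hz, ha⟩ := convex_in hst hC hm hw hne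
          exact ⟨z.1, z.2, (mem_iff _ _).1 hz, ha⟩
        · rintro i r ⟨hi, hr, hm⟩
          obtain ⟨w, hw, hne⟩ := hss.exists_ne ((⟨i, hi⟩, ⟨r, hr⟩) : Fin n × Fin 3)
          obtain ⟨z, hz, ha⟩ := convex_out hst hC hm hw hne
          exact ⟨z.1, z.2, (mem_iff _ _).1 hz, ha⟩

/-! ### Case `n = j + 2` -/

/-- Horizontal orientation, first case. -/
def HA (k i r : ℕ) : Prop := (i ≤ k ∧ (i + r + k) % 2 = 0) ∨ (k + 1 ≤ i ∧ r ≤ 1)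

/-- Vertical orientation, first case. -/
def UA (k i r : ℕ) : Prop :=
  (i ≤ k + 1 ∧ (i + r + k) % 2 = 1) ∨ (i = k + 2 ∧ r = 1) ∨ i = k + 3

theorem faceA (k : ℕ) : ∀ i r, 0 ≤ i → i < k + 1 → r < 2 → Face (HA k) (UA k) i r := by
  intro i r _ h1 h2
  grind [Face, HA, UA]

theorem faceA' (k : ℕ) : Face (HA k) (UA k) (k + 1) 1 := by
  grind [Face, HA, UA]

theorem leftA {k : ℕ} {P : ℕ → ℕ → Prop} (hP : CycClosed (k + 4) (HA k) (UA k) P)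
    (h : (P (k + 2) 1 ∧ P (k + 2) 2) ∨ (P (k + 1) 1 ∧ P (k + 1) 2)) :
    (∀ i r, i ≤ k + 1 → r < 3 → P i r) ∧ P (k + 2) 1 ∧ P (k + 2) 2 := by
  have h1 := face_closed hP (by omega) (by omega) (faceA' k) (by tauto)
  refine ⟨fun i r hi hr => ?_, h1.2.2⟩
  exact propagate hP (by omega) (by omega) (faceA k) (by omega : 0 ≤ k + 1) le_rfl
    (by omega : 1 < 2) h1.1 h1.2.1 i r (by omega) hi hr

theorem strongA (k : ℕ) : StrongConnected (gArc (k + 4) (HA k) (UA k)) := by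
  apply strong_of_mut (k + 1, 1)
  have o : Mut (k + 4) (HA k) (UA k) (k + 1, 1) (k + 1) 1 :=
    ⟨Relation.ReflTransGen.refl, Relation.ReflTransGen.refl⟩
  have s1 : Rch (k + 4) (HA k) (UA k) (k + 1, 1) (k + 2, 1) :=
    Rch.single (by grind (splits := 25) [arc, HA, UA])
  have s2 : Rch (k + 4) (HA k) (UA k) (k + 2, 1) (k + 2, 2) :=
    Rch.single (by grind (splits := 25) [arc, HA, UA])
  have s3 : Rch (k + 4) (HA k) (UA k) (k + 2, 2) (k + 1, 2) :=
    Rch.single (by grind (splits := 25) [arc, HA, UA])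
  have s4 : Rch (k + 4) (HA k) (UA k) (k + 1, 2) (k + 1, 1) :=
    Rch.single (by grind (splits := 25) [arc, HA, UA])
  obtain ⟨hL, hq, hp⟩ := leftA (cycClosed_mut (k + 4) (HA k) (UA k) (k + 1, 1))
    (Or.inl ⟨Mut.mid o o s1 (s2.trans (s3.trans s4)), Mut.mid o o (s1.trans s2) (s3.trans s4)⟩)
  have hr := hL (k + 1) 0 (by omega) (by omega)
  have t1 : Rch (k + 4) (HA k) (UA k) (k + 1, 0) (k + 2, 0) :=
    Rch.single (by grind (splits := 25) [arc, HA, UA])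
  have t2 : Rch (k + 4) (HA k) (UA k) (k + 2, 0) (k + 3, 0) :=
    Rch.single (by grind (splits := 25) [arc, HA, UA])
  have t3 : Rch (k + 4) (HA k) (UA k) (k + 3, 0) (k + 3, 1) :=
    Rch.single (by grind (splits := 25) [arc, HA, UA])
  have t4 : Rch (k + 4) (HA k) (UA k) (k + 3, 1) (k + 3, 2) :=
    Rch.single (by grind (splits := 25) [arc, HA, UA])
  have t5 : Rch (k + 4) (HA k) (UA k) (k + 3, 2) (k + 2, 2) :=
    Rch.single (by grind (splits := 25) [arc, HA, UA])
  have u1 := Mut.mid hr hp t1 (t2.trans (t3.trans (t4.trans t5)))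
  have u2 := Mut.mid u1 hp t2 (t3.trans (t4.trans t5))
  have u3 := Mut.mid u2 hp t3 (t4.trans t5)
  have u4 := Mut.mid u3 hp t4 t5
  intro i r hi hr'
  by_cases h : i ≤ k + 1
  · exact hL i r h hr'
  · have : i = k + 2 ∨ i = k + 3 := by omega
    rcases this with rfl | rfl <;> interval_cases r <;> assumption

theorem convexA (k : ℕ) : DConvex (gArc (k + 4) (HA k) (UA k)) (SS (k + 4) k) := by
  refine convex_of_potential ⟨(⟨0, by omega⟩, 0), by simp [SS]⟩ ?_
  rintro ⟨⟨a, ha⟩, ⟨c, hc⟩⟩ hx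
  simp only [SS, Set.mem_ofPred_eq] at hx
  by_cases hq : a = k + 2
  · refine ⟨fun _ => 1, by simp, by simp, ?_⟩
    rintro ⟨⟨t, ht⟩, ⟨t', ht'⟩⟩ ⟨⟨y, hy⟩, ⟨y', hy'⟩⟩ hyS ⟨⟨⟨s, hs⟩, ⟨s', hs'⟩⟩, hsS, hsA⟩ htS htA
    simp only [SS, Set.mem_ofPred_eq] at hyS hsS htS
    simp only [gArc] at hsA htA
    refine ⟨1, le_rfl, W.cons ?_ (W.refl _)⟩
    simp only [gArc]
    grind (splits := 25) [arc, HA, UA]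
  · refine ⟨fun x => if (x.1 : ℕ) = k + 2 then 1 else 2 + x.2, ?_, ?_, ?_⟩
    · rintro ⟨⟨t, ht⟩, ⟨t', ht'⟩⟩ htS htA
      simp only [SS, Set.mem_ofPred_eq] at htS
      simp only [gArc] at htA
      simp only
      split_ifs <;> grind (splits := 25) [arc, HA, UA]
    · rintro ⟨⟨t, ht⟩, ⟨t', ht'⟩⟩ ⟨⟨s, hs⟩, ⟨s', hs'⟩⟩ htS hsS htA
      simp only [SS, Set.mem_ofPred_eq] at htS hsS
      simp only [gArc] at htA
      simp only
      split_ifs <;> grind (splits := 25) [arc, HA, UA]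
    · rintro ⟨⟨t, ht⟩, ⟨t', ht'⟩⟩ ⟨⟨y, hy⟩, ⟨y', hy'⟩⟩ hyS ⟨⟨⟨s, hs⟩, ⟨s', hs'⟩⟩, hsS, hsA⟩ htS htA
      simp only [SS, Set.mem_ofPred_eq] at hyS hsS htS
      simp only [gArc] at hsA htA
      have e1 : t = k + 3 ∧ t' = 2 := by grind (splits := 25) [arc, HA, UA]
      have e2 : y = k + 2 ∧ y' = 2 := by grind (splits := 25) [arc, HA, UA]
      have e3 : a = k + 1 ∧ c = 0 := by grind (splits := 25) [arc, HA, UA]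
      obtain ⟨rfl, rfl⟩ := e1
      obtain ⟨rfl, rfl⟩ := e2
      obtain ⟨rfl, rfl⟩ := e3
      refine ⟨3, by simp, W.cons (v := (⟨k + 1, by omega⟩, 1)) ?_
        (W.cons (v := (⟨k + 2, by omega⟩, 1)) ?_ (W.cons ?_ (W.refl _)))⟩ <;>
      · simp only [gArc]; grind (splits := 25) [arc, HA, UA]

theorem caseA (k : ℕ) : 3 * (k + 2) + 2 ∈ strongConvexitySpectrum (gridGraph (k + 4) 3) := by
  refine spectrum_of le_rfl (strongA k) (convexA k) ?_
  intro C hC hin hout i r hm hS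
  have hcyc := cycClosed_convex hC
  have hi : i < k + 4 := hm.1
  have hr : r < 3 := hm.2.1
  -- forced forward steps
  have f1 : Mem C (k + 2) 0 → Mem C (k + 3) 0 := by
    intro h
    obtain ⟨i', r', h', ha⟩ := hout _ _ h
    have : i' = k + 3 ∧ r' = 0 := by grind (splits := 25) [arc, HA, UA]
    rwa [this.1, this.2] at h'
  have f2 : Mem C (k + 3) 0 → Mem C (k + 3) 1 := by
    intro h
    obtain ⟨i', r', h', ha⟩ := hout _ _ h
    have : i' = k + 3 ∧ r' = 1 := by grind (splits := 25) [arc, HA, UA]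
    rwa [this.1, this.2] at h'
  have f3 : Mem C (k + 3) 1 → Mem C (k + 3) 2 := by
    intro h
    obtain ⟨i', r', h', ha⟩ := hout _ _ h
    have : i' = k + 3 ∧ r' = 2 := by grind (splits := 25) [arc, HA, UA]
    rwa [this.1, this.2] at h'
  have f4 : Mem C (k + 3) 2 → Mem C (k + 2) 2 := by
    intro h
    obtain ⟨i', r', h', ha⟩ := hout _ _ h
    have : i' = k + 2 ∧ r' = 2 := by grind (splits := 25) [arc, HA, UA]
    rwa [this.1, this.2] at h'
  have b3 : Mem C (k + 3) 2 → Mem C (k + 3) 1 := by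
    intro h
    obtain ⟨i', r', h', ha⟩ := hin _ _ h
    have : i' = k + 3 ∧ r' = 1 := by grind (splits := 25) [arc, HA, UA]
    rwa [this.1, this.2] at h'
  have hq' : Mem C (k + 3) 1 := by
    have : (i = k + 2 ∧ r = 0) ∨ (i = k + 3 ∧ (r = 0 ∨ r = 1 ∨ r = 2)) := by omega
    rcases this with ⟨rfl, rfl⟩ | ⟨rfl, rfl | rfl | rfl⟩ <;> tauto
  have hd := f3 hq'
  have hp := f4 hd
  -- `q` belongs to `C`
  have hq : Mem C (k + 2) 1 := by
    obtain ⟨i1, r1, h1, ha1⟩ := hin _ _ hq'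
    have : (i1 = k + 2 ∧ r1 = 1) ∨ (i1 = k + 3 ∧ r1 = 0) := by grind (splits := 25) [arc, HA, UA]
    rcases this with ⟨rfl, rfl⟩ | ⟨rfl, rfl⟩
    · exact h1
    · obtain ⟨i2, r2, h2, ha2⟩ := hin _ _ h1
      have : i2 = k + 2 ∧ r2 = 0 := by grind (splits := 25) [arc, HA, UA]
      obtain ⟨rfl, rfl⟩ := this
      obtain ⟨i3, r3, h3, ha3⟩ := hin _ _ h2
      have : (i3 = k + 2 ∧ r3 = 1) ∨ (i3 = k + 1 ∧ r3 = 0) := by grind (splits := 25) [arc, HA, UA]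
      rcases this with ⟨rfl, rfl⟩ | ⟨rfl, rfl⟩
      · exact h3
      · refine (closure3 hC (i1 := k + 1) (r1 := 1) (i2 := k + 2) (r2 := 1) h3 hp ?_ ?_ ?_ ?_).2 <;>
        · grind (splits := 25) [arc, HA, UA]
  obtain ⟨hL, -, -⟩ := leftA hcyc (Or.inl ⟨hq, hp⟩)
  have hb := closure3 hC (i1 := k + 2) (r1 := 0) (i2 := k + 3) (r2 := 0)
    (hL (k + 1) 0 (by omega) (by omega)) hq'
    (by grind (splits := 25) [arc, HA, UA]) (by grind (splits := 25) [arc, HA, UA])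
    (by grind (splits := 25) [arc, HA, UA]) (by grind (splits := 25) [arc, HA, UA])
  obtain ⟨hb0, hb1⟩ := hb
  intro i r hi hr'
  by_cases h : i ≤ k + 1
  · exact hL i r h hr'
  · have : i = k + 2 ∨ i = k + 3 := by omega
    rcases this with rfl | rfl <;> interval_cases r <;> assumption

/-! ### Case `n ≥ j + 3` -/

/-- Horizontal orientation, second case. -/
def HB (k i r : ℕ) : Prop :=
  (i ≤ k + 1 ∧ (i + r + k) % 2 = 0) ∨ (i = k + 2 ∧ r = 2) ∨ (k + 3 ≤ i ∧ (i + r + k) % 2 = 1)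

/-- Vertical orientation, second case. -/
def UB (k i r : ℕ) : Prop :=
  (i ≤ k + 1 ∧ (i + r + k) % 2 = 1) ∨ i = k + 2 ∨ (k + 3 ≤ i ∧ (i + r + k) % 2 = 0)

theorem faceB (k : ℕ) : ∀ i r, 0 ≤ i → i < k + 1 → r < 2 → Face (HB k) (UB k) i r := by
  intro i r _ h1 h2
  grind [Face, HB, UB]

theorem faceB' (k : ℕ) : Face (HB k) (UB k) (k + 1) 1 := by
  grind [Face, HB, UB]

theorem faceB'' (k b : ℕ) : ∀ i r, k + 3 ≤ i → i < b → r < 2 → Face (HB k) (UB k) i r := by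
  intro i r _ h1 h2
  grind [Face, HB, UB]

theorem leftB {n k : ℕ} (hn : k + 5 ≤ n) {P : ℕ → ℕ → Prop} (hP : CycClosed n (HB k) (UB k) P)
    (h : P (k + 2) 1 ∧ P (k + 2) 2) :
    (∀ i r, i ≤ k + 1 → r < 3 → P i r) := by
  have h1 := face_closed hP (by omega) (by omega) (faceB' k) (by tauto)
  intro i r hi hr
  exact propagate hP (by omega) (by omega) (faceB k) (by omega : 0 ≤ k + 1) le_rfl
    (by omega : 1 < 2) h1.1 h1.2.1 i r (by omega) hi hr

theorem rightB {n k : ℕ} (hn : k + 5 ≤ n) {P : ℕ → ℕ → Prop} (hP : CycClosed n (HB k) (UB k) P)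
    {i r : ℕ} (hi : k + 3 ≤ i) (hin : i < n) (hr : r < 2) (h1 : P i r) (h2 : P i (r + 1)) :
    (∀ i r, k + 3 ≤ i → i < n → r < 3 → P i r) := by
  intro i' r' hi' hin' hr'
  exact propagate hP (by omega : k + 3 < n - 1) (by omega) (faceB'' k _) hi (by omega)
    hr h1 h2 i' r' hi' (by omega) hr'

theorem strongB {n k : ℕ} (hn : k + 5 ≤ n) : StrongConnected (gArc n (HB k) (UB k)) := by
  apply strong_of_mut (k + 1, 1)
  have o : Mut n (HB k) (UB k) (k + 1, 1) (k + 1) 1 :=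
    ⟨Relation.ReflTransGen.refl, Relation.ReflTransGen.refl⟩
  have s1 : Rch n (HB k) (UB k) (k + 1, 1) (k + 2, 1) :=
    Rch.single (by grind (splits := 25) [arc, HB, UB])
  have s2 : Rch n (HB k) (UB k) (k + 2, 1) (k + 2, 2) :=
    Rch.single (by grind (splits := 25) [arc, HB, UB])
  have s3 : Rch n (HB k) (UB k) (k + 2, 2) (k + 1, 2) :=
    Rch.single (by grind (splits := 25) [arc, HB, UB])
  have s4 : Rch n (HB k) (UB k) (k + 1, 2) (k + 1, 1) :=
    Rch.single (by grind (splits := 25) [arc, HB, UB])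
  have hq := Mut.mid o o s1 (s2.trans (s3.trans s4))
  have hp := Mut.mid o o (s1.trans s2) (s3.trans s4)
  have hcyc := cycClosed_mut n (HB k) (UB k) (k + 1, 1)
  have hL := leftB hn hcyc ⟨hq, hp⟩
  have t1 : Rch n (HB k) (UB k) (k + 2, 2) (k + 3, 2) :=
    Rch.single (by grind (splits := 25) [arc, HB, UB])
  have t2 : Rch n (HB k) (UB k) (k + 3, 2) (k + 4, 2) :=
    Rch.single (by grind (splits := 25) [arc, HB, UB])
  have t3 : Rch n (HB k) (UB k) (k + 4, 2) (k + 4, 1) :=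
    Rch.single (by grind (splits := 25) [arc, HB, UB])
  have t4 : Rch n (HB k) (UB k) (k + 4, 1) (k + 3, 1) :=
    Rch.single (by grind (splits := 25) [arc, HB, UB])
  have t5 : Rch n (HB k) (UB k) (k + 3, 1) (k + 2, 1) :=
    Rch.single (by grind (splits := 25) [arc, HB, UB])
  have u1 := Mut.mid hp hq t1 (t2.trans (t3.trans (t4.trans t5)))
  have u4 := Mut.mid hp hq (t1.trans (t2.trans (t3.trans t4))) t5
  have hR := rightB hn hcyc (le_refl (k + 3)) (by omega) (by omega : 1 < 2) u4 u1
  have v1 : Rch n (HB k) (UB k) (k + 3, 0) (k + 2, 0) :=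
    Rch.single (by grind (splits := 25) [arc, HB, UB])
  have v2 : Rch n (HB k) (UB k) (k + 2, 0) (k + 2, 1) :=
    Rch.single (by grind (splits := 25) [arc, HB, UB])
  have hb := Mut.mid (hR (k + 3) 0 le_rfl (by omega) (by omega)) hq v1 v2
  intro i r hi hr'
  by_cases h : i ≤ k + 1
  · exact hL i r h hr'
  · by_cases h' : k + 3 ≤ i
    · exact hR i r h' hi hr'
    · have : i = k + 2 := by omega
      subst this
      interval_cases r <;> assumption

theorem convexB {n k : ℕ} (hn : k + 5 ≤ n) : DConvex (gArc n (HB k) (UB k)) (SS n k) := by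
  refine convex_of_potential ⟨(⟨0, by omega⟩, 0), by simp [SS]⟩ ?_
  rintro ⟨⟨a, ha⟩, ⟨c, hc⟩⟩ hx
  simp only [SS, Set.mem_ofPred_eq] at hx
  refine ⟨fun x => if (x.1 : ℕ) = k + 2 then 5 else
    if (x.1 : ℕ) = k + 3 ∧ (x.2 : ℕ) = 0 then 4 else
    if (x.1 : ℕ) = k + 3 ∧ (x.2 : ℕ) = 2 then 1 else
    if (x.1 : ℕ) = k + 4 ∧ (x.2 : ℕ) = 2 then 2 else 3, ?_, ?_, ?_⟩
  · rintro ⟨⟨t, ht⟩, ⟨t', ht'⟩⟩ htS htA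
    simp only [SS, Set.mem_ofPred_eq] at htS
    simp only [gArc] at htA
    simp only
    split_ifs <;> grind (splits := 25) [arc, HB, UB]
  · rintro ⟨⟨t, ht⟩, ⟨t', ht'⟩⟩ ⟨⟨s, hs⟩, ⟨s', hs'⟩⟩ htS hsS htA
    simp only [SS, Set.mem_ofPred_eq] at htS hsS
    simp only [gArc] at htA
    simp only
    split_ifs <;> grind (splits := 25) [arc, HB, UB]
  · rintro ⟨⟨t, ht⟩, ⟨t', ht'⟩⟩ ⟨⟨y, hy⟩, ⟨y', hy'⟩⟩ hyS ⟨⟨⟨s, hs⟩, ⟨s', hs'⟩⟩, hsS, hsA⟩ htS htA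
    simp only [SS, Set.mem_ofPred_eq] at hyS hsS htS
    simp only [gArc] at hsA htA
    have e3 : a = k + 2 ∧ c = 2 := by grind (splits := 25) [arc, HB, UB]
    obtain ⟨rfl, rfl⟩ := e3
    have e : (y = k + 2 ∧ y' = 1) ∨ (t = k + 2 ∧ y = k + 1 ∧ y' = 0) := by grind (splits := 25) [arc, HB, UB]
    rcases e with ⟨rfl, rfl⟩ | ⟨rfl, rfl, rfl⟩
    · refine ⟨3, by simp only; split_ifs <;> grind (splits := 25) [arc, HB, UB], W.cons (v := (⟨k + 1, by omega⟩, 2)) ?_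
        (W.cons (v := (⟨k + 1, by omega⟩, 1)) ?_ (W.cons ?_ (W.refl _)))⟩ <;>
      · simp only [gArc]; grind (splits := 25) [arc, HB, UB]
    · refine ⟨5, by simp, W.cons (v := (⟨k + 1, by omega⟩, 2)) ?_
        (W.cons (v := (⟨k + 1, by omega⟩, 1)) ?_ (W.cons (v := (⟨k, by omega⟩, 1)) ?_
        (W.cons (v := (⟨k, by omega⟩, 0)) ?_ (W.cons ?_ (W.refl _)))))⟩ <;>
      · simp only [gArc]; grind (splits := 25) [arc, HB, UB]

theorem caseB {n k : ℕ} (hn : k + 5 ≤ n) :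
    3 * (k + 2) + 2 ∈ strongConvexitySpectrum (gridGraph n 3) := by
  refine spectrum_of (by omega) (strongB hn) (convexB hn) ?_
  intro C hC hin hout i r hm hS
  have hcyc := cycClosed_convex hC
  -- an adjacent pair in the right block gives the whole right block
  have pair : ∀ i r i' r', k + 3 ≤ i → k + 3 ≤ i' → Mem C i r → Mem C i' r' →
      arc n (HB k) (UB k) i r i' r' → ∀ i r, k + 3 ≤ i → i < n → r < 3 → Mem C i r := by
    have hor : ∀ i r, k + 3 ≤ i → Mem C i r → Mem C (i + 1) r →
        ∀ i r, k + 3 ≤ i → i < n → r < 3 → Mem C i r := by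
      intro i r h1 h2 h3
      have hi := h3.1
      have hr := h3.2.1
      by_cases hr2 : r < 2
      · have := face_closed hcyc hi hr2 (faceB'' k n i r h1 (by omega) hr2) (by tauto)
        exact rightB hn hcyc h1 (by omega) hr2 this.1 this.2.1
      · have : r = 1 + 1 := by omega
        subst this
        have := face_closed hcyc hi (by omega) (faceB'' k n i 1 h1 (by omega) (by omega)) (by tauto)
        exact rightB hn hcyc h1 (by omega) (by omega) this.1 this.2.1
    intro i r i' r' h1 h2 h3 h4 ha
    have b1 := h3.1
    have b2 := h3.2.1
    have b4 := h4.2.1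
    obtain ⟨_, _, _, _, ⟨rfl, rfl, _⟩ | ⟨rfl, rfl, _⟩ | ⟨rfl, rfl, _⟩ | ⟨rfl, rfl, _⟩⟩ := ha
    · exact hor _ _ h1 h3 h4
    · exact hor _ _ h2 h4 h3
    · exact rightB hn hcyc h1 b1 (by omega) h3 h4
    · exact rightB hn hcyc h1 b1 (by omega) h4 h3
  -- a vertex in the right block
  have hv : ∃ i r, k + 3 ≤ i ∧ Mem C i r := by
    by_cases h : k + 3 ≤ i
    · exact ⟨i, r, h, hm⟩
    · have : i = k + 2 ∧ r = 0 := by omega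
      obtain ⟨rfl, rfl⟩ := this
      obtain ⟨i', r', h', ha⟩ := hin _ _ hm
      exact ⟨i', r', by grind (splits := 25) [arc, HB, UB], h'⟩
  obtain ⟨i1, r1, hi1, hm1⟩ := hv
  have hR : ∀ i r, k + 3 ≤ i → i < n → r < 3 → Mem C i r := by
    by_cases hc : i1 = k + 3 ∧ r1 = 2
    · obtain ⟨i', r', h', ha⟩ := hout _ _ hm1
      refine pair i1 r1 i' r' hi1 ?_ hm1 h' ha
      grind (splits := 25) [arc, HB, UB]
    · obtain ⟨i', r', h', ha⟩ := hin _ _ hm1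
      refine pair i' r' i1 r1 ?_ hi1 h' hm1 ha
      grind (splits := 25) [arc, HB, UB]
  obtain ⟨hb, hq, hp⟩ := closure4 hC (i1 := k + 2) (r1 := 0) (i2 := k + 2) (r2 := 1)
    (i3 := k + 2) (r3 := 2) (hR (k + 3) 0 le_rfl (by omega) (by omega))
    (hR (k + 3) 2 le_rfl (by omega) (by omega))
    (by grind (splits := 25) [arc, HB, UB]) (by grind (splits := 25) [arc, HB, UB])
    (by grind (splits := 25) [arc, HB, UB]) (by grind (splits := 25) [arc, HB, UB])
    (by omega) (by intro i r h1 h2; grind (splits := 25) [arc, HB, UB])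
  have hL := leftB hn hcyc ⟨hq, hp⟩
  intro i r hi hr'
  by_cases h : i ≤ k + 1
  · exact hL i r h hr'
  · by_cases h' : k + 3 ≤ i
    · exact hR i r h' hi hr'
    · have : i = k + 2 := by omega
      subst this
      interval_cases r <;> assumption

end GridSpec

/-- Realizable values `3j + 2` in the strong convexity spectrum of `P_n □ P_3`. -/
theorem three_j_add_two_mem_strongConvexitySpectrum_grid_n3 (n : ℕ) (hn : 2 ≤ n)
    (j : ℕ) (hjl : 2 ≤ j) (hju : j ≤ n - 2) :
    3 * j + 2 ∈ strongConvexitySpectrum (gridGraph n 3) := by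
  obtain ⟨k, rfl⟩ : ∃ k, j = k + 2 := ⟨j - 2, by omega⟩
  by_cases h : n = k + 4
  · subst h
    exact GridSpec.caseA k
  · exact GridSpec.caseB (by omega)
end

section
/- Let n ≥ 2 be an integer and let G be the grid P_n □ P_3. If j is an integer such that 3 ≤ j ≤ n−2, then 3j+1 ∈ S_SC(G). -/
/-!  Common definitions: oriented graphs, geodesic convexity, convexity number,
strong convexity spectrum, and grid graphs. -/

variable {V : Type*}

/-! ### General facts about walks and convex sets -/

/-- There is a walk of length `k` from `u` to `v`. -/
def Wk (A : V → V → Prop) (k : ℕ) (u v : V) : Prop := ∃ f, IsDirWalk A k f u v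

theorem Wk.refl (A : V → V → Prop) (u : V) : Wk A 0 u u :=
  ⟨fun _ => u, rfl, rfl, fun i hi => absurd hi (Nat.not_lt_zero i)⟩

theorem Wk.cons {A : V → V → Prop} {k : ℕ} {u v w : V} (h : A u v) (hw : Wk A k v w) :
    Wk A (k + 1) u w := by
  obtain ⟨f, h0, hk, hs⟩ := hw
  refine ⟨fun i => Nat.casesOn i u f, rfl, hk, ?_⟩
  intro i hi
  cases i with
  | zero => simpa [h0] using h
  | succ i => exact hs i (by omega)

theorem Wk.zero_eq {A : V → V → Prop} {u v : V} (h : Wk A 0 u v) : u = v := by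
  obtain ⟨f, h0, hk, _⟩ := h
  exact h0.symm.trans hk

theorem Wk.uncons {A : V → V → Prop} {k : ℕ} {u w : V} (h : Wk A (k + 1) u w) :
    ∃ v, A u v ∧ Wk A k v w := by
  obtain ⟨f, h0, hk, hs⟩ := h
  refine ⟨f 1, ?_, fun i => f (i + 1), rfl, hk, fun i hi => hs (i + 1) (by omega)⟩
  have := hs 0 (by omega)
  rwa [h0] at this

theorem Wk.append {A : V → V → Prop} {k l : ℕ} {u v w : V} (h : Wk A k u v) (hw : Wk A l v w) :
    Wk A (k + l) u w := by
  induction k generalizing u with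
  | zero => rw [h.zero_eq, Nat.zero_add]; exact hw
  | succ k ih =>
    obtain ⟨x, hx, hr⟩ := h.uncons
    have := Wk.cons hx (ih hr)
    rwa [show k + 1 + l = k + l + 1 by omega]

theorem IsDirWalk.takeWk {A : V → V → Prop} {k : ℕ} {f : ℕ → V} {u v : V}
    (h : IsDirWalk A k f u v) {i : ℕ} (hi : i ≤ k) : Wk A i u (f i) :=
  ⟨f, h.1, rfl, fun m hm => h.2.2 m (by omega)⟩

theorem IsDirWalk.dropWk {A : V → V → Prop} {k : ℕ} {f : ℕ → V} {u v : V}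
    (h : IsDirWalk A k f u v) {i : ℕ} (hi : i ≤ k) : Wk A (k - i) (f i) v :=
  ⟨fun m => f (i + m), rfl, by simpa [Nat.add_sub_cancel' hi] using h.2.1,
    fun m hm => h.2.2 (i + m) (by omega)⟩

theorem Wk.potential {A : V → V → Prop} {φ : V → ℕ} (hφ : ∀ a b, A a b → φ a ≤ φ b + 1)
    {k : ℕ} {u v : V} (h : Wk A k u v) : φ u ≤ φ v + k := by
  induction k generalizing u with
  | zero => rw [h.zero_eq]; omega
  | succ k ih =>
    obtain ⟨x, hx, hr⟩ := h.uncons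
    have := hφ _ _ hx
    have := ih hr
    omega

/-- First step of a geodesic certified by a potential function. -/
theorem DConvex.step {A : V → V → Prop} {S : Set V} (hS : DConvex A S) {φ : V → ℕ}
    (hφ : ∀ a b, A a b → φ a ≤ φ b + 1) {k : ℕ} {u w v : V} (hu : u ∈ S) (hv : v ∈ S)
    (huw : A u w) (hw : Wk A k w v) (h0 : φ v = 0) (hk : φ u = k + 1) : w ∈ S := by
  obtain ⟨f, h0', hk', hs⟩ := hw
  have hwalk : IsDirWalk A (k + 1) (fun i => Nat.casesOn i u f) u v := by
    refine ⟨rfl, hk', ?_⟩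
    intro i hi
    cases i with
    | zero => simpa [h0'] using huw
    | succ i => exact hs i (by omega)
  have := hS.2 u hu v hv (k + 1) _ ⟨hwalk, ?_⟩ 1 (by omega)
  · simpa [h0'] using this
  · intro k' f' hf'
    have := Wk.potential hφ ⟨f', hf'⟩
    omega

theorem DConvex.two {A : V → V → Prop} {S : Set V} (hS : DConvex A S) (par : V → Bool)
    (hpar : ∀ a b, A a b → par a ≠ par b) {x z y : V} (hx : x ∈ S) (hy : y ∈ S)
    (hxz : A x z) (hzy : A z y) (hne : x ≠ y) : z ∈ S := by
  classical
  refine hS.step (φ := fun a => if a = y then 0 else if par a = par y then 2 else 1)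
    ?_ hx hy hxz (Wk.cons hzy (Wk.refl A y)) (by simp) ?_
  · intro a b hab
    have := hpar a b hab
    by_cases h1 : a = y
    · simp [h1]
    · by_cases h2 : b = y
      · subst h2; simp [h1, this]
      · simp only [h1, h2, if_false]
        split_ifs <;> omega
  · have h1 := hpar _ _ hxz
    have h2 := hpar _ _ hzy
    have h3 : par x = par y := by
      cases hpx : par x <;> cases hpz : par z <;> cases hpy : par y <;> simp_all
    simp [hne, h3]

theorem DConvex.cyc {A : V → V → Prop} {S : Set V} (hS : DConvex A S) (par : V → Bool)
    (hpar : ∀ a b, A a b → par a ≠ par b) (hanti : ∀ a b, A a b → ¬ A b a)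
    {x y a b : V} (hx : x ∈ S) (hy : y ∈ S)
    (hyx : A y x) (hxa : A x a) (hab : A a b) (hby : A b y) : a ∈ S ∧ b ∈ S := by
  classical
  have hne : x ≠ y := fun h => hpar _ _ hyx (by rw [h])
  have hyx' := hpar _ _ hyx
  have ha : a ∈ S := by
    refine hS.step (φ := fun c => if c = y then 0 else if A c y then 1 else
        if par c = par y then 2 else 3)
      ?_ hx hy hxa (Wk.cons hab (Wk.cons hby (Wk.refl A y))) (by simp) ?_
    · intro c d hcd
      have hp := hpar c d hcd
      by_cases h1 : c = y
      · simp [h1]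
      · by_cases h2 : d = y
        · subst h2; simp [h1, hcd]
        · simp only [h1, h2, if_false]
          by_cases h3 : A d y
          · have h4 := hpar d y h3
            have h5 : par c = par y := by
              cases hpx : par c <;> cases hpz : par d <;> cases hpy : par y <;> simp_all
            simp only [h3, h5, if_true]
            split_ifs <;> omega
          · simp only [h3, if_false]
            split_ifs <;> omega
    · simp [hne, hanti _ _ hyx, hyx'.symm]
  refine ⟨ha, ?_⟩
  refine hS.two par hpar ha hy hab hby ?_
  intro h
  subst h
  exact hanti _ _ hxa hyx

theorem DirReachable.exists_geodesic {A : V → V → Prop} {u v : V} (h : DirReachable A u v) :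
    ∃ k f, IsGeodesic A k f u v := by
  classical
  have h' : ∃ k, Wk A k u v := h
  obtain ⟨f, hf⟩ := Nat.find_spec h'
  exact ⟨_, f, hf, fun k' f' hf' => Nat.find_min' h' ⟨f', hf'⟩⟩

theorem exists_crossing {T : Set V} {f : ℕ → V} (k : ℕ) (h0 : f 0 ∈ T) (hk : f k ∉ T) :
    ∃ i, i < k ∧ f i ∈ T ∧ f (i + 1) ∉ T := by
  induction k with
  | zero => exact absurd h0 hk
  | succ k ih =>
    by_cases h : f k ∈ T
    · exact ⟨k, by omega, h, hk⟩
    · obtain ⟨i, hi, h1⟩ := ih h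
      exact ⟨i, by omega, h1⟩

theorem DConvex.cut {A : V → V → Prop} {S : Set V} (hS : DConvex A S) (hA : StrongConnected A)
    (T : Set V) {u v : V} (hu : u ∈ S) (hv : v ∈ S) (huT : u ∈ T) (hvT : v ∉ T) :
    ∃ a ∈ S, ∃ b ∈ S, A a b ∧ a ∈ T ∧ b ∉ T := by
  obtain ⟨k, f, hf⟩ := (hA u v).exists_geodesic
  obtain ⟨i, hi, h1, h2⟩ := exists_crossing (T := T) (f := f) k
    (by rw [hf.1.1]; exact huT) (by rw [hf.1.2.1]; exact hvT)
  exact ⟨f i, hS.2 u hu v hv k f hf i (by omega), f (i + 1),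
    hS.2 u hu v hv k f hf (i + 1) (by omega), hf.1.2.2 i hi, h1, h2⟩

theorem DConvex.exists_in {A : V → V → Prop} {S : Set V} (hS : DConvex A S)
    (hA : StrongConnected A) {u v : V} (hu : u ∈ S) (hv : v ∈ S) (hne : v ≠ u) :
    ∃ w ∈ S, A w u := by
  obtain ⟨a, ha, b, _, hab, _, hb⟩ := hS.cut hA {w | w ≠ u} hv hu hne (by simp)
  have : b = u := by simpa using hb
  exact ⟨a, ha, this ▸ hab⟩

theorem DConvex.exists_out {A : V → V → Prop} {S : Set V} (hS : DConvex A S)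
    (hA : StrongConnected A) {u v : V} (hu : u ∈ S) (hv : v ∈ S) (hne : v ≠ u) :
    ∃ w ∈ S, A u w := by
  obtain ⟨a, _, b, hb, hab, ha, _⟩ := hS.cut hA {u} hu hv (by simp) (by simpa using hne)
  have : a = u := by simpa using ha
  exact ⟨b, hb, this ▸ hab⟩

/-- A criterion for convexity: all excursions out of `C` can be short-cut through `t`. -/
theorem dconvex_of_shortcut {A : V → V → Prop} {C : Set V} (t : V) (ht : t ∈ C) (h : V → ℕ)
    (hout : ∀ a b, A a b → a ∉ C → b ∉ C → h a ≤ h b + 1)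
    (hin : ∀ a b, A a b → a ∉ C → b ∈ C → (b = t ∧ h a ≤ 1) ∨ (A t b ∧ h a = 0))
    (hex : ∀ a b, A a b → a ∈ C → b ∉ C → ∃ g, Wk A g a t ∧ g ≤ h b) : DConvex A C := by
  have key : ∀ l w v, w ∉ C → v ∈ C → Wk A l w v → ∃ l', Wk A l' t v ∧ l' + h w ≤ l := by
    intro l
    induction l with
    | zero => intro w v hw hv hwk; exact absurd (hwk.zero_eq ▸ hv) hw
    | succ l ih =>
      intro w v hw hv hwk
      obtain ⟨x, hx, hr⟩ := hwk.uncons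
      by_cases hxC : x ∈ C
      · rcases hin w x hx hw hxC with ⟨rfl, h1⟩ | ⟨h1, h2⟩
        · exact ⟨l, hr, by omega⟩
        · exact ⟨l + 1, Wk.cons h1 hr, by omega⟩
      · obtain ⟨l', h1, h2⟩ := ih x v hxC hv hr
        have := hout w x hx hw hxC
        exact ⟨l', h1, by omega⟩
  refine ⟨⟨t, ht⟩, ?_⟩
  intro u hu v hv k f hf i hi
  by_contra hfi
  obtain ⟨s, hs, h1, h2⟩ := exists_crossing (T := C) (f := f) i (by rw [hf.1.1]; exact hu) hfi
  obtain ⟨g, hg, hgh⟩ := hex _ _ (hf.1.2.2 s (by omega)) h1 h2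
  obtain ⟨l', hl', hle⟩ := key _ _ _ h2 hv (hf.1.dropWk (i := s + 1) (by omega))
  obtain ⟨f', hf'⟩ := ((hf.1.takeWk (i := s) (by omega)).append hg).append hl'
  have := hf.2 _ f' hf'
  omega

/-! ### The orientation, in integer coordinates (row `i`, column `c ∈ {0,1,2}`) -/

/-- The horizontal edge between `(i,c)` and `(i,c+1)` is directed to the right. -/
def Hr (i c : ℤ) : Prop :=
  (c = 0 ∧ ((i ≤ -1 ∧ i % 2 = 0) ∨ (2 ≤ i ∧ i % 2 = 1))) ∨
  (c = 1 ∧ ((i ≤ -1 ∧ i % 2 = 1) ∨ i = 0 ∨ (2 ≤ i ∧ i % 2 = 0)))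

/-- The vertical edge between `(i,c)` and `(i+1,c)` is directed towards `(i+1,c)`. -/
def Vr (i c : ℤ) : Prop :=
  (c ≠ 1 ∧ i ≤ -3 ∧ i % 2 = 1) ∨ (c = 1 ∧ i ≤ -3 ∧ i % 2 = 0) ∨
  (-2 ≤ i ∧ i ≤ -1 ∧ 1 ≤ c) ∨ (i = 0 ∧ c = 2) ∨
  (1 ≤ i ∧ c ≠ 1 ∧ i % 2 = 0) ∨ (1 ≤ i ∧ c = 1 ∧ i % 2 = 1)

/-- The arc relation in integer coordinates. -/
def ar (i c i' c' : ℤ) : Prop :=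
  (i' = i ∧ c' = c + 1 ∧ Hr i c) ∨ (i = i' ∧ c = c' + 1 ∧ ¬ Hr i' c') ∨
  (c' = c ∧ i' = i + 1 ∧ Vr i c) ∨ (c = c' ∧ i = i' + 1 ∧ ¬ Vr i' c')

/-- The big convex set. -/
def inC (i c : ℤ) : Prop := i ≤ -2 ∨ (i ≤ 0 ∧ c ≤ 1)

/-- Distance-like potential towards the vertex `(0,1)`. -/
def pot (i c : ℤ) : ℕ :=
  if i ≤ -3 then 4 else
  if i = -2 then (if c = 1 then 2 else 3) else
  if i = -1 then (if c = 1 then 1 else 4) else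
  if i = 0 then (if c = 0 then 5 else if c = 1 then 0 else 3) else
  if i = 1 then (if c = 0 then 6 else if c = 1 then 1 else 2) else
  if i = 2 then (if c = 0 then 7 else if c = 1 then 4 else 3) else
  if i = 3 then (if c = 1 then 5 else 6) else 5

/-- Lower bound for the length of excursions outside the convex set. -/
def hgt (i c : ℤ) : ℕ :=
  if i = -1 then 4 else if i = 0 then 3 else
  if i = 1 then (if c = 0 then 0 else if c = 1 then 1 else 2) else 0

theorem pot_arc {i c i' c' : ℤ} (h : ar i c i' c') (hc : 0 ≤ c) (hc2 : c ≤ 2) (hc' : 0 ≤ c')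
    (hc2' : c' ≤ 2) : pot i c ≤ pot i' c' + 1 := by
  unfold ar Hr Vr at h
  rcases lt_or_ge i (-4) with hi | hi
  · have : i' ≤ -3 := by omega
    have : i ≤ -3 := by omega
    simp [pot, *]
  rcases lt_or_ge 5 i with hi2 | hi2
  · have e1 : pot i c = 5 := by
      unfold pot; split_ifs <;> omega
    have e2 : pot i' c' = 5 := by
      unfold pot; split_ifs <;> omega
    omega
  have hii : i' = i ∨ i' = i + 1 ∨ i' = i - 1 := by omega
  interval_cases i <;> rcases hii with rfl | rfl | rfl <;> interval_cases c <;>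
    interval_cases c' <;> first | (exfalso; omega) | (simp [pot])

theorem hgt_out {i c i' c' : ℤ} (h : ar i c i' c') (hc : 0 ≤ c) (hc2 : c ≤ 2) (hc' : 0 ≤ c')
    (hc2' : c' ≤ 2) (h1 : ¬ inC i c) (h2 : ¬ inC i' c') : hgt i c ≤ hgt i' c' + 1 := by
  unfold ar Hr Vr at h
  unfold inC at h1 h2
  unfold hgt
  split_ifs <;> omega

theorem hgt_in {i c i' c' : ℤ} (h : ar i c i' c') (hc : 0 ≤ c) (hc2 : c ≤ 2) (hc' : 0 ≤ c')
    (hc2' : c' ≤ 2) (h1 : ¬ inC i c) (h2 : inC i' c') :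
    ((i' = 0 ∧ c' = 1) ∧ hgt i c ≤ 1) ∨ ((i' = 0 ∧ c' = 0) ∧ hgt i c = 0) := by
  unfold ar Hr Vr at h
  unfold inC at h1 h2
  unfold hgt
  split_ifs <;> omega

theorem exits {i c i' c' : ℤ} (h : ar i c i' c') (hc : 0 ≤ c) (hc2 : c ≤ 2) (hc' : 0 ≤ c')
    (hc2' : c' ≤ 2) (h1 : inC i c) (h2 : ¬ inC i' c') :
    (i = -2 ∧ c = 2 ∧ i' = -1 ∧ c' = 2) ∨ (i = -1 ∧ c = 1 ∧ i' = -1 ∧ c' = 2) ∨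
    (i = 0 ∧ c = 1 ∧ i' = 0 ∧ c' = 2) := by
  unfold ar Hr Vr at h
  unfold inC at h1 h2
  omega

/-- Vertex sets in the strip of rows `lo, …, hi` closed under the two local rules. -/
structure Cl (lo hi : ℤ) (P : ℤ → ℤ → Prop) : Prop where
  two : ∀ x1 x2 z1 z2 y1 y2 : ℤ, lo ≤ z1 → z1 ≤ hi → 0 ≤ z2 → z2 ≤ 2 → P x1 x2 → P y1 y2 →
    ar x1 x2 z1 z2 → ar z1 z2 y1 y2 → ¬ (x1 = y1 ∧ x2 = y2) → P z1 z2
  cyc : ∀ x1 x2 y1 y2 a1 a2 b1 b2 : ℤ, lo ≤ a1 → a1 ≤ hi → 0 ≤ a2 → a2 ≤ 2 →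
    lo ≤ b1 → b1 ≤ hi → 0 ≤ b2 → b2 ≤ 2 → P x1 x2 → P y1 y2 →
    ar y1 y2 x1 x2 → ar x1 x2 a1 a2 → ar a1 a2 b1 b2 → ar b1 b2 y1 y2 → P a1 a2 ∧ P b1 b2

section
variable {lo hi : ℤ} {P : ℤ → ℤ → Prop}

theorem Cl.cell4 (h : Cl lo hi P) (x1 x2 y1 y2 a1 a2 b1 b2 : ℤ)
    (ra : lo ≤ a1 ∧ a1 ≤ hi ∧ 0 ≤ a2 ∧ a2 ≤ 2) (rb : lo ≤ b1 ∧ b1 ≤ hi ∧ 0 ≤ b2 ∧ b2 ≤ 2)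
    (hx : P x1 x2) (hy : P y1 y2)
    (hc : (ar y1 y2 x1 x2 ∧ ar x1 x2 a1 a2 ∧ ar a1 a2 b1 b2 ∧ ar b1 b2 y1 y2) ∨
      (ar x1 x2 y1 y2 ∧ ar y1 y2 b1 b2 ∧ ar b1 b2 a1 a2 ∧ ar a1 a2 x1 x2)) :
    P a1 a2 ∧ P b1 b2 := by
  obtain ⟨r1, r2, r3, r4⟩ := ra
  obtain ⟨s1, s2, s3, s4⟩ := rb
  rcases hc with ⟨c1, c2, c3, c4⟩ | ⟨c1, c2, c3, c4⟩
  · exact h.cyc x1 x2 y1 y2 a1 a2 b1 b2 r1 r2 r3 r4 s1 s2 s3 s4 hx hy c1 c2 c3 c4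
  · exact (h.cyc y1 y2 x1 x2 b1 b2 a1 a2 s1 s2 s3 s4 r1 r2 r3 r4 hy hx c1 c2 c3 c4).symm

/-- The unit cell with corners `(i,c)` and `(i+1,c+1)` is a directed cycle. -/
def Cyc (i c : ℤ) : Prop :=
  (ar i c i (c+1) ∧ ar i (c+1) (i+1) (c+1) ∧ ar (i+1) (c+1) (i+1) c ∧ ar (i+1) c i c) ∨
  (ar i (c+1) i c ∧ ar (i+1) (c+1) i (c+1) ∧ ar (i+1) c (i+1) (c+1) ∧ ar i c (i+1) c)

theorem ar_right {i c : ℤ} (h : Hr i c) : ar i c i (c+1) := Or.inl ⟨rfl, rfl, h⟩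

theorem ar_left {i c : ℤ} (h : ¬ Hr i c) : ar i (c+1) i c := Or.inr (Or.inl ⟨rfl, rfl, h⟩)

theorem ar_down {i c : ℤ} (h : Vr i c) : ar i c (i+1) c :=
  Or.inr (Or.inr (Or.inl ⟨rfl, rfl, h⟩))

theorem ar_up {i c : ℤ} (h : ¬ Vr i c) : ar (i+1) c i c :=
  Or.inr (Or.inr (Or.inr ⟨rfl, rfl, h⟩))

theorem cyc_cell {i c : ℤ} (hreg : i ≤ -3 ∨ 2 ≤ i) (hc : c = 0 ∨ c = 1) : Cyc i c := by
  by_cases hH : Hr i c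
  · refine Or.inl ⟨ar_right hH, ar_down ?_, ar_left ?_, ar_up ?_⟩ <;>
      unfold Hr at * <;> (try unfold Vr) <;> omega
  · refine Or.inr ⟨ar_left hH, ar_up ?_, ar_right ?_, ar_down ?_⟩ <;>
      unfold Hr at * <;> (try unfold Vr) <;> omega

theorem Cl.top (h : Cl lo hi P) {i c : ℤ} (hcy : Cyc i c) (hl : lo ≤ i) (hh : i + 1 ≤ hi)
    (c0 : 0 ≤ c) (c1 : c ≤ 1) (hx : P i c) (hy : P i (c+1)) : P (i+1) c ∧ P (i+1) (c+1) :=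
  h.cell4 i c i (c+1) (i+1) c (i+1) (c+1) (by omega) (by omega) hx hy
    (by unfold Cyc at hcy; tauto)

theorem Cl.bot (h : Cl lo hi P) {i c : ℤ} (hcy : Cyc i c) (hl : lo ≤ i) (hh : i + 1 ≤ hi)
    (c0 : 0 ≤ c) (c1 : c ≤ 1) (hx : P (i+1) c) (hy : P (i+1) (c+1)) : P i c ∧ P i (c+1) :=
  h.cell4 (i+1) c (i+1) (c+1) i c i (c+1) (by omega) (by omega) hx hy
    (by unfold Cyc at hcy; tauto)

theorem Cl.left (h : Cl lo hi P) {i c : ℤ} (hcy : Cyc i c) (hl : lo ≤ i) (hh : i + 1 ≤ hi)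
    (c0 : 0 ≤ c) (c1 : c ≤ 1) (hx : P i c) (hy : P (i+1) c) : P i (c+1) ∧ P (i+1) (c+1) :=
  h.cell4 i c (i+1) c i (c+1) (i+1) (c+1) (by omega) (by omega) hx hy
    (by unfold Cyc at hcy; tauto)

theorem Cl.right (h : Cl lo hi P) {i c : ℤ} (hcy : Cyc i c) (hl : lo ≤ i) (hh : i + 1 ≤ hi)
    (c0 : 0 ≤ c) (c1 : c ≤ 1) (hx : P i (c+1)) (hy : P (i+1) (c+1)) : P i c ∧ P (i+1) c :=
  h.cell4 i (c+1) (i+1) (c+1) i c (i+1) c (by omega) (by omega) hx hy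
    (by unfold Cyc at hcy; tauto)

/-- A full row. -/
def Row (P : ℤ → ℤ → Prop) (i : ℤ) : Prop := P i 0 ∧ P i 1 ∧ P i 2

theorem Cl.rows_of_vert (h : Cl lo hi P) {i c : ℤ} (hreg : i ≤ -3 ∨ 2 ≤ i) (hl : lo ≤ i)
    (hh : i + 1 ≤ hi) (c0 : 0 ≤ c) (c1 : c ≤ 2) (hx : P i c) (hy : P (i+1) c) :
    Row P i ∧ Row P (i+1) := by
  have k0 := cyc_cell (c := 0) hreg (Or.inl rfl)
  have k1 := cyc_cell (c := 1) hreg (Or.inr rfl)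
  have hm : P i 1 ∧ P (i+1) 1 := by
    have : c = 0 ∨ c = 1 ∨ c = 2 := by omega
    rcases this with rfl | rfl | rfl
    · exact h.left k0 hl hh (by omega) (by omega) hx hy
    · exact ⟨hx, hy⟩
    · exact h.right k1 hl hh (by omega) (by omega) hx hy
  obtain ⟨a1, a2⟩ := h.right k0 hl hh (by omega) (by omega) hm.1 hm.2
  obtain ⟨b1, b2⟩ := h.left k1 hl hh (by omega) (by omega) hm.1 hm.2
  exact ⟨⟨a1, hm.1, b1⟩, ⟨a2, hm.2, b2⟩⟩

theorem Cl.rows_of_top (h : Cl lo hi P) {i c : ℤ} (hreg : i ≤ -3 ∨ 2 ≤ i) (hl : lo ≤ i)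
    (hh : i + 1 ≤ hi) (hc : c = 0 ∨ c = 1) (hx : P i c) (hy : P i (c+1)) :
    Row P i ∧ Row P (i+1) :=
  h.rows_of_vert hreg hl hh (c := c) (by omega) (by omega) hx
    (h.top (cyc_cell hreg hc) hl hh (by omega) (by omega) hx hy).1

theorem Cl.rows_of_bot (h : Cl lo hi P) {i c : ℤ} (hreg : i ≤ -3 ∨ 2 ≤ i) (hl : lo ≤ i)
    (hh : i + 1 ≤ hi) (hc : c = 0 ∨ c = 1) (hx : P (i+1) c) (hy : P (i+1) (c+1)) :
    Row P i ∧ Row P (i+1) :=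
  h.rows_of_vert hreg hl hh (c := c) (by omega) (by omega)
    (h.bot (cyc_cell hreg hc) hl hh (by omega) (by omega) hx hy).1 hx

theorem Cl.up_rows (h : Cl lo hi P) (hhi : 1 ≤ hi) (h2 : Row P (-2)) (k : ℕ)
    (hk : lo ≤ -2 - (k : ℤ)) : Row P (-2 - (k : ℤ)) := by
  induction k with
  | zero => simpa using h2
  | succ k ih =>
    push_cast at hk ⊢
    have := ih (by omega)
    have e : (-2 - (k : ℤ)) = (-2 - ((k : ℤ) + 1)) + 1 := by ring
    rw [e] at this
    exact (h.rows_of_bot (c := 0) (by omega) (by omega) (by omega) (Or.inl rfl)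
      this.1 this.2.1).1

theorem Cl.down_rows (h : Cl lo hi P) (hlo : lo ≤ -3) (h2 : Row P 2) (k : ℕ)
    (hk : 2 + (k : ℤ) ≤ hi) : Row P (2 + (k : ℤ)) := by
  induction k with
  | zero => simpa using h2
  | succ k ih =>
    push_cast at hk ⊢
    have := ih (by omega)
    have := (h.rows_of_top (c := 0) (by omega) (by omega) (by omega) (Or.inl rfl)
      this.1 this.2.1).2
    rwa [← add_assoc]

theorem Cl.to_row2 (h : Cl lo hi P) (hlo : lo ≤ -3) (k : ℕ) (hk : 2 + (k : ℤ) ≤ hi)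
    (h2 : Row P (2 + (k : ℤ))) : Row P 2 := by
  induction k with
  | zero => simpa using h2
  | succ k ih =>
    push_cast at hk h2
    rw [← add_assoc] at h2 hk
    exact ih (by omega) (h.rows_of_bot (c := 0) (by omega) (by omega) (by omega) (Or.inl rfl)
      h2.1 h2.2.1).1

/-- An arc in the lower part generates row `2`, provided there are at least two lower rows. -/
theorem Cl.bulk (h : Cl lo hi P) (hlo : lo ≤ -3) (hhi : 3 ≤ hi) {i c i' c' : ℤ}
    (ha : ar i c i' c') (h1 : P i c) (h2 : P i' c') (ri : 2 ≤ i ∧ i ≤ hi)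
    (ri' : 2 ≤ i' ∧ i' ≤ hi) (rc : 0 ≤ c ∧ c ≤ 2) (rc' : 0 ≤ c' ∧ c' ≤ 2) : Row P 2 := by
  have main : ∃ k : ℕ, 2 + (k : ℤ) ≤ hi ∧ Row P (2 + (k : ℤ)) := by
    have hor : ∀ i c : ℤ, 2 ≤ i → i ≤ hi → (c = 0 ∨ c = 1) → P i c → P i (c+1) → Row P i := by
      intro i c hi1 hi2 hc hx hy
      by_cases hlt : i + 1 ≤ hi
      · exact (h.rows_of_top (c := c) (by omega) (by omega) hlt hc hx hy).1
      · have e : i = (i - 1) + 1 := by ring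
        rw [e] at hx hy ⊢
        exact (h.rows_of_bot (c := c) (by omega) (by omega) (by omega) hc hx hy).2
    have : ∃ m, 2 ≤ m ∧ m ≤ hi ∧ Row P m := by
      unfold ar at ha
      rcases ha with ⟨rfl, rfl, -⟩ | ⟨rfl, rfl, -⟩ | ⟨rfl, rfl, -⟩ | ⟨rfl, rfl, -⟩
      · exact ⟨_, ri.1, ri.2, hor _ _ ri.1 ri.2 (by omega) h1 h2⟩
      · exact ⟨_, ri.1, ri.2, hor _ _ ri.1 ri.2 (by omega) h2 h1⟩
      · exact ⟨_, ri.1, ri.2, (h.rows_of_vert (by omega) (by omega) ri'.2 rc.1 rc.2 h1 h2).1⟩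
      · exact ⟨_, ri'.1, ri'.2, (h.rows_of_vert (by omega) (by omega) ri.2 rc.1 rc.2 h2 h1).1⟩
    obtain ⟨m, h1, h2, h3⟩ := this
    refine ⟨(m - 2).toNat, ?_, ?_⟩
    · omega
    · have : (2 : ℤ) + ((m - 2).toNat : ℤ) = m := by omega
      rwa [this]
  obtain ⟨k, hk, hr⟩ := main
  exact h.to_row2 hlo k hk hr

/-- The core vertices generate everything. -/
theorem Cl.all (h : Cl lo hi P) (hlo : lo ≤ -3) (hhi : 1 ≤ hi)
    (p01 : P 0 1) (p02 : P 0 2) (p12 : P 1 2) (p11 : P 1 1) (p00 : P 0 0) (pm10 : P (-1) 0)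
    (pm20 : P (-2) 0) (pm21 : P (-2) 1) (pm11 : P (-1) 1) (i c : ℤ) (hi1 : lo ≤ i)
    (hi2 : i ≤ hi) (hc : 0 ≤ c) (hc2 : c ≤ 2) : P i c := by
  have rm2 : Row P (-2) := (h.rows_of_bot (i := -3) (c := 0) (by omega) hlo (by omega)
    (Or.inl rfl) pm20 pm21).2
  have pm12 : P (-1) 2 := h.two (-2) 2 (-1) 2 0 2 (by omega) (by omega) (by omega) (by omega)
    rm2.2.2 p02 (by unfold ar Hr Vr; omega) (by unfold ar Hr Vr; omega) (by omega)
  have p10 : P 1 0 := h.two 1 1 1 0 0 0 (by omega) (by omega) (by omega) (by omega)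
    p11 p00 (by unfold ar Hr Vr; omega) (by unfold ar Hr Vr; omega) (by omega)
  have row_split : i ≤ -2 ∨ i = -1 ∨ i = 0 ∨ i = 1 ∨ 2 ≤ i := by omega
  have fin : Row P i := by
    rcases row_split with h1 | rfl | rfl | rfl | h1
    · have e : -2 - (((-2 - i).toNat : ℕ) : ℤ) = i := by omega
      have := h.up_rows hhi rm2 (-2 - i).toNat (by omega)
      rwa [e] at this
    · exact ⟨pm10, pm11, pm12⟩
    · exact ⟨p00, p01, p02⟩
    · exact ⟨p10, p11, p12⟩
    · have hh : 2 ≤ hi := by omega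
      obtain ⟨p21, p22⟩ := h.cell4 1 1 1 2 2 1 2 2 (by omega) (by omega) p11 p12
        (Or.inl ⟨by unfold ar Hr Vr; omega, by unfold ar Hr Vr; omega,
          by unfold ar Hr Vr; omega, by unfold ar Hr Vr; omega⟩)
      have p20 : P 2 0 := h.two 2 1 2 0 1 0 (by omega) (by omega) (by omega) (by omega)
        p21 p10 (by unfold ar Hr Vr; omega) (by unfold ar Hr Vr; omega) (by omega)
      have e : 2 + (((i - 2).toNat : ℕ) : ℤ) = i := by omega
      have := h.down_rows hlo ⟨p20, p21, p22⟩ (i - 2).toNat (by omega)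
      rwa [e] at this
  have : c = 0 ∨ c = 1 ∨ c = 2 := by omega
  rcases this with rfl | rfl | rfl
  · exact fin.1
  · exact fin.2.1
  · exact fin.2.2

end

/-! ### The orientation of the grid -/

/-- Shifted row coordinate. -/
def ri {n : ℕ} (j : ℕ) (u : Fin n × Fin 3) : ℤ := (u.1.val : ℤ) - j

/-- Column coordinate. -/
def co {n : ℕ} (u : Fin n × Fin 3) : ℤ := (u.2.val : ℤ)

/-- The orientation. -/
def arcs (n j : ℕ) (u v : Fin n × Fin 3) : Prop := ar (ri j u) (co u) (ri j v) (co v)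

/-- The maximum convex set. -/
def bigC (n j : ℕ) : Set (Fin n × Fin 3) := {u | inC (ri j u) (co u)}

/-- A set of grid vertices, in integer coordinates. -/
def PS {n : ℕ} (j : ℕ) (S : Set (Fin n × Fin 3)) (i c : ℤ) : Prop :=
  ∃ u ∈ S, ri j u = i ∧ co u = c

section
variable {n j : ℕ}

theorem ri_range (u : Fin n × Fin 3) :
    -(j : ℤ) ≤ ri j u ∧ ri j u ≤ (n : ℤ) - 1 - j ∧ 0 ≤ co u ∧ co u ≤ 2 := by
  unfold ri co
  have h1 := u.1.isLt
  have h2 := u.2.isLt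
  omega

theorem vx_ext {u v : Fin n × Fin 3} (h1 : ri j u = ri j v) (h2 : co u = co v) : u = v := by
  unfold ri at h1
  unfold co at h2
  refine Prod.ext (Fin.ext ?_) (Fin.ext ?_) <;> omega

theorem vx_ex {i c : ℤ} (h1 : -(j : ℤ) ≤ i) (h2 : i ≤ (n : ℤ) - 1 - j) (h3 : 0 ≤ c)
    (h4 : c ≤ 2) : ∃ u : Fin n × Fin 3, ri j u = i ∧ co u = c := by
  refine ⟨(⟨(i + j).toNat, by omega⟩, ⟨c.toNat, by omega⟩), ?_, ?_⟩
  · simp only [ri]; omega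
  · simp only [co]; omega

theorem arcs_of {u v : Fin n × Fin 3} {i c i' c' : ℤ} (hu : ri j u = i ∧ co u = c)
    (hv : ri j v = i' ∧ co v = c') (h : ar i c i' c') : arcs n j u v := by
  unfold arcs
  rwa [hu.1, hu.2, hv.1, hv.2]

theorem ar_total {i c i' c' : ℤ} (h : ((i + 1 = i' ∨ i' + 1 = i) ∧ c = c') ∨
    ((c + 1 = c' ∨ c' + 1 = c) ∧ i = i')) : ar i c i' c' ∨ ar i' c' i c := by
  rcases h with ⟨h | h, h'⟩ | ⟨h | h, h'⟩
  · subst h h'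
    by_cases hv : Vr i c
    · exact Or.inl (ar_down hv)
    · exact Or.inr (ar_up hv)
  · subst h h'
    by_cases hv : Vr i' c
    · exact Or.inr (ar_down hv)
    · exact Or.inl (ar_up hv)
  · subst h h'
    by_cases hv : Hr i c
    · exact Or.inl (ar_right hv)
    · exact Or.inr (ar_left hv)
  · subst h h'
    by_cases hv : Hr i c'
    · exact Or.inr (ar_right hv)
    · exact Or.inl (ar_left hv)

theorem ar_anti {i c i' c' : ℤ} (h : ar i c i' c') : ¬ ar i' c' i c := by
  intro h'
  rcases h with ⟨a, b, h⟩ | ⟨a, b, h⟩ | ⟨a, b, h⟩ | ⟨a, b, h⟩ <;>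
  rcases h' with ⟨a', b', h'⟩ | ⟨a', b', h'⟩ | ⟨a', b', h'⟩ | ⟨a', b', h'⟩ <;>
  first
  | (exfalso; omega)
  | (subst a; contradiction)

theorem arcs_orientation : IsOrientation (gridGraph n 3) (arcs n j) := by
  have hadj : ∀ x y : Fin n × Fin 3, (gridGraph n 3).Adj x y ↔
      ((ri j x + 1 = ri j y ∨ ri j y + 1 = ri j x) ∧ co x = co y) ∨
      ((co x + 1 = co y ∨ co y + 1 = co x) ∧ ri j x = ri j y) := by
    intro x y
    unfold gridGraph
    rw [SimpleGraph.boxProd_adj, SimpleGraph.pathGraph_adj, SimpleGraph.pathGraph_adj,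
      Fin.ext_iff, Fin.ext_iff]
    unfold ri co
    omega
  refine ⟨?_, ?_, ?_⟩
  · intro x y h
    rw [hadj]
    unfold arcs ar at h
    omega
  · intro x y h
    rw [hadj] at h
    exact ar_total h
  · intro x y h
    exact ar_anti h

theorem cl_of {S : Set (Fin n × Fin 3)}
    (two : ∀ x z y, x ∈ S → y ∈ S → arcs n j x z → arcs n j z y → x ≠ y → z ∈ S)
    (cyc : ∀ x y a b, x ∈ S → y ∈ S → arcs n j y x → arcs n j x a → arcs n j a b →
      arcs n j b y → a ∈ S ∧ b ∈ S) : Cl (-(j : ℤ)) ((n : ℤ) - 1 - j) (PS j S) := by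
  constructor
  · rintro x1 x2 z1 z2 y1 y2 h1 h2 h3 h4 ⟨x, hx, hx'⟩ ⟨y, hy, hy'⟩ a1 a2 hne
    obtain ⟨z, hz⟩ := vx_ex h1 h2 h3 h4
    refine ⟨z, two x z y hx hy (arcs_of hx' hz a1) (arcs_of hz hy' a2) ?_, hz⟩
    rintro rfl
    exact hne ⟨hx'.1.symm.trans hy'.1, hx'.2.symm.trans hy'.2⟩
  · rintro x1 x2 y1 y2 a1 a2 b1 b2 h1 h2 h3 h4 k1 k2 k3 k4 ⟨x, hx, hx'⟩ ⟨y, hy, hy'⟩ c1 c2 c3 c4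
    obtain ⟨a, ha⟩ := vx_ex h1 h2 h3 h4
    obtain ⟨b, hb⟩ := vx_ex k1 k2 k3 k4
    obtain ⟨ma, mb⟩ := cyc x y a b hx hy (arcs_of hy' hx' c1) (arcs_of hx' ha c2)
      (arcs_of ha hb c3) (arcs_of hb hy' c4)
    exact ⟨⟨a, ma, ha⟩, ⟨b, mb, hb⟩⟩

theorem PS_mem {S : Set (Fin n × Fin 3)} {u : Fin n × Fin 3} (h : PS j S (ri j u) (co u)) :
    u ∈ S := by
  obtain ⟨v, hv, h1, h2⟩ := h
  rwa [← vx_ext h1 h2]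

theorem PS_range {S : Set (Fin n × Fin 3)} {i c : ℤ} (h : PS j S i c) :
    -(j : ℤ) ≤ i ∧ i ≤ (n : ℤ) - 1 - j ∧ 0 ≤ c ∧ c ≤ 2 := by
  obtain ⟨u, _, rfl, rfl⟩ := h
  exact ri_range u

theorem DirReachable.trans' {A : V → V → Prop} {u v w : V} (h : DirReachable A u v)
    (h' : DirReachable A v w) : DirReachable A u w := by
  obtain ⟨k, hk⟩ := h
  obtain ⟨l, hl⟩ := h'
  exact ⟨k + l, Wk.append hk hl⟩

theorem DirReachable.of_arc {A : V → V → Prop} {u v : V} (h : A u v) : DirReachable A u v :=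
  ⟨1, Wk.cons h (Wk.refl A v)⟩

/-- The arcs of the core. -/
theorem core_arcs : ar 0 1 0 0 ∧ ar 0 0 (-1) 0 ∧ ar (-1) 0 (-2) 0 ∧ ar (-2) 0 (-2) 1 ∧
    ar (-2) 1 (-1) 1 ∧ ar (-1) 1 0 1 ∧ ar 0 1 0 2 ∧ ar 0 2 1 2 ∧ ar 1 2 1 1 ∧ ar 1 1 0 1 := by
  refine ⟨?_, ?_, ?_, ?_, ?_, ?_, ?_, ?_, ?_, ?_⟩ <;> unfold ar Hr Vr <;> omega

theorem arcs_strong (hj : 3 ≤ j) (hn : j + 2 ≤ n) : StrongConnected (arcs n j) := by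
  obtain ⟨c1, c2, c3, c4, c5, c6, c7, c8, c9, c10⟩ := core_arcs
  obtain ⟨t, ht⟩ := vx_ex (n := n) (j := j) (i := 0) (c := 1) (by omega) (by omega) (by omega) (by omega)
  obtain ⟨q, hq⟩ := vx_ex (n := n) (j := j) (i := 0) (c := 0) (by omega) (by omega) (by omega) (by omega)
  obtain ⟨v1, hv1⟩ := vx_ex (n := n) (j := j) (i := -1) (c := 0) (by omega) (by omega) (by omega) (by omega)
  obtain ⟨v2, hv2⟩ := vx_ex (n := n) (j := j) (i := -2) (c := 0) (by omega) (by omega) (by omega) (by omega)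
  obtain ⟨v3, hv3⟩ := vx_ex (n := n) (j := j) (i := -2) (c := 1) (by omega) (by omega) (by omega) (by omega)
  obtain ⟨m, hm⟩ := vx_ex (n := n) (j := j) (i := -1) (c := 1) (by omega) (by omega) (by omega) (by omega)
  obtain ⟨y, hy⟩ := vx_ex (n := n) (j := j) (i := 0) (c := 2) (by omega) (by omega) (by omega) (by omega)
  obtain ⟨c, hc⟩ := vx_ex (n := n) (j := j) (i := 1) (c := 2) (by omega) (by omega) (by omega) (by omega)
  obtain ⟨b, hb⟩ := vx_ex (n := n) (j := j) (i := 1) (c := 1) (by omega) (by omega) (by omega) (by omega)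
  have a1 := DirReachable.of_arc (arcs_of ht hq c1)
  have a2 := DirReachable.of_arc (arcs_of hq hv1 c2)
  have a3 := DirReachable.of_arc (arcs_of hv1 hv2 c3)
  have a4 := DirReachable.of_arc (arcs_of hv2 hv3 c4)
  have a5 := DirReachable.of_arc (arcs_of hv3 hm c5)
  have a6 := DirReachable.of_arc (arcs_of hm ht c6)
  have a7 := DirReachable.of_arc (arcs_of ht hy c7)
  have a8 := DirReachable.of_arc (arcs_of hy hc c8)
  have a9 := DirReachable.of_arc (arcs_of hc hb c9)
  have a10 := DirReachable.of_arc (arcs_of hb ht c10)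
  let S : Set (Fin n × Fin 3) := {u | DirReachable (arcs n j) t u ∧ DirReachable (arcs n j) u t}
  have hcl : Cl (-(j : ℤ)) ((n : ℤ) - 1 - j) (PS j S) := by
    apply cl_of
    · rintro x z y hx hy h1 h2 -
      exact ⟨hx.1.trans' (.of_arc h1), (DirReachable.of_arc h2).trans' hy.2⟩
    · rintro x y a b hx hy - h2 h3 h4
      have k1 := hx.1.trans' (.of_arc h2)
      have k2 := (DirReachable.of_arc h4).trans' hy.2
      exact ⟨⟨k1, (DirReachable.of_arc h3).trans' k2⟩, ⟨k1.trans' (.of_arc h3), k2⟩⟩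
  have b2 := a1.trans' a2
  have b3 := b2.trans' a3
  have b4 := b3.trans' a4
  have b5 := b4.trans' a5
  have d5 := a5.trans' a6
  have d4 := a4.trans' d5
  have d3 := a3.trans' d4
  have d2 := a2.trans' d3
  have e8 := a7.trans' a8
  have e9 := e8.trans' a9
  have f9 := a9.trans' a10
  have f8 := a8.trans' f9
  have all : ∀ u, u ∈ S := by
    intro u
    obtain ⟨r1, r2, r3, r4⟩ := ri_range (j := j) u
    refine PS_mem (hcl.all (by omega) (by omega) ⟨t, ⟨b5.trans' a6, b5.trans' a6⟩, ht⟩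
      ⟨y, ⟨a7, f8⟩, hy⟩ ⟨c, ⟨e8, f9⟩, hc⟩ ⟨b, ⟨e9, a10⟩, hb⟩ ⟨q, ⟨a1, d2⟩, hq⟩
      ⟨v1, ⟨b2, d3⟩, hv1⟩ ⟨v2, ⟨b3, d4⟩, hv2⟩ ⟨v3, ⟨b4, d5⟩, hv3⟩ ⟨m, ⟨b5, a6⟩, hm⟩
      _ _ r1 r2 r3 r4)
  intro u v
  exact (all u).2.trans' (all v).1

theorem bigC_convex (hj : 3 ≤ j) (hn : j + 2 ≤ n) : DConvex (arcs n j) (bigC n j) := by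
  obtain ⟨c1, c2, c3, c4, c5, c6, c7, c8, c9, c10⟩ := core_arcs
  obtain ⟨t, ht⟩ := vx_ex (n := n) (j := j) (i := 0) (c := 1) (by omega) (by omega) (by omega) (by omega)
  obtain ⟨v3, hv3⟩ := vx_ex (n := n) (j := j) (i := -2) (c := 1) (by omega) (by omega) (by omega) (by omega)
  obtain ⟨m, hm⟩ := vx_ex (n := n) (j := j) (i := -1) (c := 1) (by omega) (by omega) (by omega) (by omega)
  refine dconvex_of_shortcut t ?_ (fun u => hgt (ri j u) (co u)) ?_ ?_ ?_
  · show inC _ _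
    rw [ht.1, ht.2]; unfold inC; omega
  · intro a b hab ha hb
    obtain ⟨-, -, r1, r2⟩ := ri_range (j := j) a
    obtain ⟨-, -, s1, s2⟩ := ri_range (j := j) b
    exact hgt_out hab r1 r2 s1 s2 ha hb
  · intro a b hab ha hb
    obtain ⟨-, -, r1, r2⟩ := ri_range (j := j) a
    obtain ⟨-, -, s1, s2⟩ := ri_range (j := j) b
    rcases hgt_in hab r1 r2 s1 s2 ha hb with ⟨h1, h2⟩ | ⟨h1, h2⟩
    · exact Or.inl ⟨vx_ext (h1.1.trans ht.1.symm) (h1.2.trans ht.2.symm), h2⟩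
    · exact Or.inr ⟨arcs_of ht h1 c1, h2⟩
  · intro a b hab ha hb
    obtain ⟨-, -, r1, r2⟩ := ri_range (j := j) a
    obtain ⟨-, -, s1, s2⟩ := ri_range (j := j) b
    have w1 := Wk.cons (arcs_of hm ht c6) (Wk.refl _ t)
    have w2 := Wk.cons (arcs_of hv3 hm c5) w1
    rcases exits hab r1 r2 s1 s2 ha hb with ⟨h1, h2, h3, h4⟩ | ⟨h1, h2, h3, h4⟩ | ⟨h1, h2, h3, h4⟩
    · refine ⟨_, Wk.cons (arcs_of ⟨h1, h2⟩ hv3 ?_) w2, ?_⟩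
      · unfold ar Hr Vr; omega
      · simp [h3, h4, hgt]
    · have : a = m := vx_ext (h1.trans hm.1.symm) (h2.trans hm.2.symm)
      refine ⟨_, this ▸ w1, ?_⟩
      simp [h3, h4, hgt]
    · have : a = t := vx_ext (h1.trans ht.1.symm) (h2.trans ht.2.symm)
      refine ⟨0, ?_, ?_⟩
      · rw [this]; exact Wk.refl _ t
      · simp [h3, h4, hgt]

theorem bigC_ncard (hj : 3 ≤ j) (hn : j + 2 ≤ n) : (bigC n j).ncard = 3 * j + 1 := by
  have e : bigC n j = ((Finset.Iio (⟨j - 1, by omega⟩ : Fin n) ×ˢ (Finset.univ : Finset (Fin 3)) ∪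
      Finset.Icc (⟨j - 1, by omega⟩ : Fin n) ⟨j, by omega⟩ ×ˢ
        (Finset.Iio (2 : Fin 3)) : Finset (Fin n × Fin 3)) : Set (Fin n × Fin 3)) := by
    ext u
    have := u.2.isLt
    simp only [bigC, inC, ri, co, Set.mem_ofPred_eq, Finset.coe_union, Set.mem_union,
      Finset.mem_coe, Finset.mem_product, Finset.mem_Iio, Finset.mem_Icc, Finset.mem_univ,
      Fin.lt_def, Fin.le_def, and_true]
    have h2 : ((2 : Fin 3) : ℕ) = 2 := rfl
    rw [h2]
    omega
  rw [e, Set.ncard_coe_finset, Finset.card_union_of_disjoint, Finset.card_product,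
    Finset.card_product, Fin.card_Iio, Fin.card_Icc, Fin.card_Iio]
  · simp; omega
  · rw [Finset.disjoint_left]
    intro u h1 h2
    simp only [Finset.mem_product, Finset.mem_Iio, Finset.mem_Icc] at h1 h2
    exact absurd h1.1 (not_lt.mpr h2.1.1)

end

/-- A convex set with a vertex outside `bigC` contains the arc from `(1,2)` to `(1,1)`. -/
theorem Cl.ring_arc {lo hi : ℤ} {P : ℤ → ℤ → Prop} (h : Cl lo hi P) (hlo : lo ≤ -3)
    (hhi : 1 ≤ hi)
    (rng : ∀ i c, P i c → lo ≤ i ∧ i ≤ hi ∧ 0 ≤ c ∧ c ≤ 2)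
    (hin : ∀ i c, P i c → ∃ i' c', P i' c' ∧ ar i' c' i c)
    (hout : ∀ i c, P i c → ∃ i' c', P i' c' ∧ ar i c i' c')
    {i c : ℤ} (hp : P i c) (hn : ¬ inC i c) : P 1 1 ∧ P 1 2 := by
  have fwd : ∀ i c a b : ℤ, P i c → (∀ i' c', ar i c i' c' → 0 ≤ c' → c' ≤ 2 → i' = a ∧ c' = b) →
      P a b := by
    intro i c a b hp hu
    obtain ⟨i', c', h1, h2⟩ := hout i c hp
    obtain ⟨-, -, r3, r4⟩ := rng _ _ h1
    obtain ⟨rfl, rfl⟩ := hu i' c' h2 r3 r4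
    exact h1
  have hB : P 1 1 → P 1 1 ∧ P 1 2 := by
    intro hb
    obtain ⟨i', c', h1, h2⟩ := hin _ _ hb
    obtain ⟨-, -, r3, r4⟩ := rng _ _ h1
    have : i' = 1 ∧ c' = 2 := by
      unfold ar Hr Vr at h2; omega
    obtain ⟨rfl, rfl⟩ := this
    exact ⟨hb, h1⟩
  have hCc : P 1 2 → P 1 1 ∧ P 1 2 := by
    intro hc
    exact ⟨fwd 1 2 1 1 hc (by intro i' c' h2 _ _; unfold ar Hr Vr at h2; omega), hc⟩
  have hY : P 0 2 → P 1 1 ∧ P 1 2 := by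
    intro hc
    exact hCc (fwd 0 2 1 2 hc (by intro i' c' h2 _ _; unfold ar Hr Vr at h2; omega))
  have hX : P (-1) 2 → P 1 1 ∧ P 1 2 := by
    intro hc
    exact hY (fwd (-1) 2 0 2 hc (by intro i' c' h2 _ _; unfold ar Hr Vr at h2; omega))
  have hlow : ∀ i c, 2 ≤ i → P i c → P 1 1 ∧ P 1 2 := by
    intro i c hi2 hp
    obtain ⟨i', c', h1, h2⟩ := hin _ _ hp
    obtain ⟨r1, r2, r3, r4⟩ := rng _ _ hp
    obtain ⟨s1, s2, s3, s4⟩ := rng _ _ h1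
    by_cases hi' : 2 ≤ i'
    · by_cases h3 : 3 ≤ hi
      · have hr := h.bulk hlo h3 h2 h1 hp ⟨hi', s2⟩ ⟨hi2, r2⟩ ⟨s3, s4⟩ ⟨r3, r4⟩
        have := h.cell4 2 1 2 2 1 1 1 2 (by omega) (by omega) hr.2.1 hr.2.2
          (Or.inr ⟨by unfold ar Hr Vr; omega, by unfold ar Hr Vr; omega,
            by unfold ar Hr Vr; omega, by unfold ar Hr Vr; omega⟩)
        exact this
      · have : i' = 2 ∧ c' = 1 := by
          unfold ar Hr Vr at h2; omega
        obtain ⟨rfl, rfl⟩ := this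
        obtain ⟨i'', c'', h5, h6⟩ := hin _ _ h1
        obtain ⟨t1, t2, t3, t4⟩ := rng _ _ h5
        have : i'' = 1 ∧ c'' = 1 := by
          unfold ar Hr Vr at h6; omega
        obtain ⟨rfl, rfl⟩ := this
        exact hB h5
    · have : i' = 1 ∧ c' = 1 := by
        unfold ar Hr Vr at h2; omega
      obtain ⟨rfl, rfl⟩ := this
      exact hB h1
  obtain ⟨r1, r2, r3, r4⟩ := rng _ _ hp
  have cases5 : (i = -1 ∧ c = 2) ∨ (i = 0 ∧ c = 2) ∨ (i = 1 ∧ c = 2) ∨ (i = 1 ∧ c = 1) ∨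
      (i = 1 ∧ c = 0) ∨ 2 ≤ i := by
    unfold inC at hn; omega
  rcases cases5 with ⟨rfl, rfl⟩ | ⟨rfl, rfl⟩ | ⟨rfl, rfl⟩ | ⟨rfl, rfl⟩ | ⟨rfl, rfl⟩ | h2
  · exact hX hp
  · exact hY hp
  · exact hCc hp
  · exact hB hp
  · obtain ⟨i', c', h1, h2⟩ := hin _ _ hp
    obtain ⟨s1, s2, s3, s4⟩ := rng _ _ h1
    by_cases hi' : 2 ≤ i'
    · exact hlow _ _ hi' h1
    · have : i' = 1 ∧ c' = 1 := by
        unfold ar Hr Vr at h2; omega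
      obtain ⟨rfl, rfl⟩ := this
      exact hB h1
  · exact hlow _ _ h2 hp

/-- A large convex set that leaves `bigC` is everything. -/
theorem big {n j : ℕ} (hj : 3 ≤ j) (hn : j + 2 ≤ n) {S : Set (Fin n × Fin 3)}
    (hS : DConvex (arcs n j) S) {w : Fin n × Fin 3} (hw : w ∈ S) (hwC : w ∉ bigC n j)
    (hcard : 3 * j + 1 < S.ncard) : S = Set.univ := by
  have hA := arcs_strong hj hn
  have hanti : ∀ a b, arcs n j a b → ¬ arcs n j b a := fun a b h => ar_anti h
  let par : Fin n × Fin 3 → Bool := fun u => decide ((ri j u + co u) % 2 = 0)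
  have hpar : ∀ a b, arcs n j a b → par a ≠ par b := by
    intro a b h
    have h' : (ri j a + co a) % 2 = 0 ↔ ¬ (ri j b + co b) % 2 = 0 := by
      unfold arcs ar at h; omega
    simp only [par]
    intro he
    have := decide_eq_decide.mp he
    tauto
  have hcl : Cl (-(j : ℤ)) ((n : ℤ) - 1 - j) (PS j S) :=
    cl_of (fun x z y hx hy h1 h2 h3 => hS.two par hpar hx hy h1 h2 h3)
      (fun x y a b hx hy h1 h2 h3 h4 => hS.cyc par hpar hanti hx hy h1 h2 h3 h4)
  have hother : ∀ u ∈ S, ∃ v ∈ S, v ≠ u := by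
    intro u _
    exact Set.exists_ne_of_one_lt_ncard (by omega) u
  have hin : ∀ i c, PS j S i c → ∃ i' c', PS j S i' c' ∧ ar i' c' i c := by
    rintro i c ⟨u, hu, rfl, rfl⟩
    obtain ⟨v, hv, hne⟩ := hother u hu
    obtain ⟨z, hz, hzu⟩ := hS.exists_in hA hu hv hne
    exact ⟨_, _, ⟨z, hz, rfl, rfl⟩, hzu⟩
  have hout : ∀ i c, PS j S i c → ∃ i' c', PS j S i' c' ∧ ar i c i' c' := by
    rintro i c ⟨u, hu, rfl, rfl⟩
    obtain ⟨v, hv, hne⟩ := hother u hu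
    obtain ⟨z, hz, hzu⟩ := hS.exists_out hA hu hv hne
    exact ⟨_, _, ⟨z, hz, rfl, rfl⟩, hzu⟩
  obtain ⟨p11, p12⟩ := hcl.ring_arc (by omega) (by omega) (fun i c h => PS_range h) hin hout
    ⟨w, hw, rfl, rfl⟩ hwC
  obtain ⟨c1, c2, c3, c4, c5, c6, c7, c8, c9, c10⟩ := core_arcs
  obtain ⟨p01, p02⟩ := hcl.cell4 1 1 1 2 0 1 0 2 (by omega) (by omega) p11 p12
    (Or.inl ⟨c9, c10, c7, c8⟩)
  obtain ⟨t, ht⟩ := vx_ex (n := n) (j := j) (i := 0) (c := 1) (by omega) (by omega) (by omega) (by omega)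
  obtain ⟨q, hq⟩ := vx_ex (n := n) (j := j) (i := 0) (c := 0) (by omega) (by omega) (by omega) (by omega)
  obtain ⟨v1, hv1⟩ := vx_ex (n := n) (j := j) (i := -1) (c := 0) (by omega) (by omega) (by omega) (by omega)
  obtain ⟨v2, hv2⟩ := vx_ex (n := n) (j := j) (i := -2) (c := 0) (by omega) (by omega) (by omega) (by omega)
  obtain ⟨v3, hv3⟩ := vx_ex (n := n) (j := j) (i := -2) (c := 1) (by omega) (by omega) (by omega) (by omega)
  obtain ⟨m, hm⟩ := vx_ex (n := n) (j := j) (i := -1) (c := 1) (by omega) (by omega) (by omega) (by omega)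
  obtain ⟨a, ha⟩ := vx_ex (n := n) (j := j) (i := 1) (c := 0) (by omega) (by omega) (by omega) (by omega)
  have tS : t ∈ S := PS_mem (j := j) (by rw [ht.1, ht.2]; exact p01)
  have w0 := Wk.refl (arcs n j) t
  have w1 := Wk.cons (arcs_of hm ht c6) w0
  have w2 := Wk.cons (arcs_of hv3 hm c5) w1
  have w3 := Wk.cons (arcs_of hv2 hv3 c4) w2
  have w4 := Wk.cons (arcs_of hv1 hv2 c3) w3
  have w5 := Wk.cons (arcs_of hq hv1 c2) w4
  have haq : arcs n j a q := arcs_of ha hq (by unfold ar Hr Vr; omega)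
  have w6 := Wk.cons haq w5
  have hφ : ∀ u v, arcs n j u v → pot (ri j u) (co u) ≤ pot (ri j v) (co v) + 1 := by
    intro u v h
    obtain ⟨-, -, r1, r2⟩ := ri_range (j := j) u
    obtain ⟨-, -, s1, s2⟩ := ri_range (j := j) v
    exact pot_arc h r1 r2 s1 s2
  have h0 : pot (ri j t) (co t) = 0 := by rw [ht.1, ht.2]; simp [pot]
  have qS : q ∈ S := by
    by_cases hbig : 3 ≤ (n : ℤ) - 1 - j
    · obtain ⟨p21, p22⟩ := hcl.cell4 1 1 1 2 2 1 2 2 (by omega) (by omega) p11 p12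
        (Or.inl ⟨c9, by unfold ar Hr Vr; omega, by unfold ar Hr Vr; omega,
          by unfold ar Hr Vr; omega⟩)
      have hr := hcl.bulk (i := 2) (c := 1) (i' := 2) (c' := 2) (by omega) hbig
        (by unfold ar Hr Vr; omega) p21 p22
        (by omega) (by omega) (by omega) (by omega)
      obtain ⟨z, hz, hz'⟩ := hr.1
      have aS : a ∈ S := hS.step (φ := fun u => pot (ri j u) (co u)) hφ hz tS
        (arcs_of hz' ha (by unfold ar Hr Vr; omega)) w6 h0
        (by show pot _ _ = _; rw [hz'.1, hz'.2]; simp [pot])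
      exact hS.step (φ := fun u => pot (ri j u) (co u)) hφ aS tS haq w5 h0
        (by show pot _ _ = _; rw [ha.1, ha.2]; simp [pot])
    · have hT : ((bigC n j)ᶜ ∪ {t}).ncard < S.ncard := by
        have e1 := Set.ncard_union_le (bigC n j)ᶜ {t}
        have e2 := Set.ncard_add_ncard_compl (bigC n j)
        have e3 : Nat.card (Fin n × Fin 3) = n * 3 := by simp
        rw [bigC_ncard hj hn, e3] at e2
        rw [Set.ncard_singleton] at e1
        omega
      obtain ⟨v, hv, hvT⟩ := Set.exists_mem_notMem_of_ncard_lt_ncard hT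
      obtain ⟨x, hx, y, hy, hxy, hxT, hyT⟩ := hS.cut hA ((bigC n j)ᶜ ∪ {t}) tS hv
        (Or.inr rfl) hvT
      have hyC : y ∈ bigC n j := by
        by_contra hc
        exact hyT (Or.inl hc)
      have hyt : y ≠ t := fun hc => hyT (Or.inr hc)
      obtain ⟨-, -, r1, r2⟩ := ri_range (j := j) x
      obtain ⟨-, -, s1, s2⟩ := ri_range (j := j) y
      have hyq : ri j y = 0 ∧ co y = 0 := by
        rcases hxT with hxT | hxT
        · rcases hgt_in hxy r1 r2 s1 s2 hxT hyC with ⟨h1, -⟩ | ⟨h1, -⟩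
          · exact absurd (vx_ext (h1.1.trans ht.1.symm) (h1.2.trans ht.2.symm)) hyt
          · exact h1
        · have hxt : x = t := hxT
          subst hxt
          have hxy' : ar (ri j x) (co x) (ri j y) (co y) := hxy
          have hyC' : inC (ri j y) (co y) := hyC
          rw [ht.1, ht.2] at hxy'
          unfold ar Hr Vr at hxy'
          unfold inC at hyC'
          omega
      rwa [← vx_ext (j := j) (hyq.1.trans hq.1.symm) (hyq.2.trans hq.2.symm)]
  have v1S : v1 ∈ S := hS.step (φ := fun u => pot (ri j u) (co u)) hφ qS tS
    (arcs_of hq hv1 c2) w4 h0 (by show pot _ _ = _; rw [hq.1, hq.2]; simp [pot])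
  have v2S : v2 ∈ S := hS.step (φ := fun u => pot (ri j u) (co u)) hφ v1S tS
    (arcs_of hv1 hv2 c3) w3 h0 (by show pot _ _ = _; rw [hv1.1, hv1.2]; simp [pot])
  have v3S : v3 ∈ S := hS.step (φ := fun u => pot (ri j u) (co u)) hφ v2S tS
    (arcs_of hv2 hv3 c4) w2 h0 (by show pot _ _ = _; rw [hv2.1, hv2.2]; simp [pot])
  have mS : m ∈ S := hS.step (φ := fun u => pot (ri j u) (co u)) hφ v3S tS
    (arcs_of hv3 hm c5) w1 h0 (by show pot _ _ = _; rw [hv3.1, hv3.2]; simp [pot])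
  rw [Set.eq_univ_iff_forall]
  intro u
  obtain ⟨r1, r2, r3, r4⟩ := ri_range (j := j) u
  exact PS_mem (hcl.all (by omega) (by omega) p01 p02 p12 p11 ⟨q, qS, hq⟩ ⟨v1, v1S, hv1⟩
    ⟨v2, v2S, hv2⟩ ⟨v3, v3S, hv3⟩ ⟨m, mS, hm⟩ _ _ r1 r2 r3 r4)

/-- Realizable values `3j + 1` in the strong convexity spectrum of `P_n □ P_3`. -/
theorem three_j_add_one_mem_strongConvexitySpectrum_grid_n3 (n : ℕ) (hn : 2 ≤ n)
    (j : ℕ) (hjl : 3 ≤ j) (hju : j ≤ n - 2) :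
    3 * j + 1 ∈ strongConvexitySpectrum (gridGraph n 3) := by
  have hn' : j + 2 ≤ n := by omega
  refine ⟨arcs n j, arcs_orientation, arcs_strong hjl hn', ?_⟩
  refine IsGreatest.csSup_eq ⟨⟨bigC n j, bigC_convex hjl hn', ?_, bigC_ncard hjl hn'⟩, ?_⟩
  · intro h
    have := bigC_ncard hjl hn'
    rw [h, Set.ncard_univ] at this
    simp at this
    omega
  · rintro k ⟨S, hS, hne, rfl⟩
    by_contra hlt
    have hns : ¬ S ⊆ bigC n j := by
      intro hsub
      have := Set.ncard_le_ncard hsub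
      rw [bigC_ncard hjl hn'] at this
      omega
    obtain ⟨w, hw, hwC⟩ := Set.not_subset.mp hns
    exact hne (big hjl hn' hS hw hwC (by omega))
end
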